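/- arXiv:2008.13352 — 11 statements merged into one kernel-verified Lean document; each statement's English description precedes it below -/
import Mathlib

section
/- Let I ⊆ ℝ be an open interval, u = (u₁,u₂) a pair of functions I → ℂ, ζ₁ ≠ ζ₂ complex numbers, ψ₁ a ζ₁-wave and ψ₂ a ζ₂-wave for u such that the Wronskian W(ψ₂,ψ₁) vanishes nowhere on I. Then: (i) D(u,(ζ₁,ζ₂),(ψ₁,ψ₂))ψ₁ = 0 and D(u,(ζ₁,ζ₂),(ψ₁,ψ₂))ψ₂ = 0 at every point of I; and (ii) the intertwining operator is symmetric under exchanging the indices, i.e. for every differentiable φ : I → ℂ², D(u,(ζ₂,ζ₁),(ψ₂,ψ₁))φ = D(u,(ζ₁,ζ₂),(ψ₁,ψ₂))φ on I. -/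
noncomputable section

/-- Wronskian of two `ℂ²`-valued functions: `W(φ,ψ) = φ₁ψ₂ − φ₂ψ₁`. -/
def Wr (φ ψ : ℝ → ℂ × ℂ) (x : ℝ) : ℂ := (φ x).1 * (ψ x).2 - (φ x).2 * (ψ x).1

/-- A ζ-wave for the pair `u = (u₁,u₂)` on the set `I`:
a differentiable solution of the Zakharov–Shabat system
`ψ₁' = −iζψ₁ + u₁ψ₂`, `ψ₂' = iζψ₂ − u₂ψ₁` on `I`. -/
def IsWave (I : Set ℝ) (u₁ u₂ : ℝ → ℂ) (ζ : ℂ) (ψ : ℝ → ℂ × ℂ) : Prop :=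
  ∀ x ∈ I,
    HasDerivAt (fun y => (ψ y).1) (-Complex.I * ζ * (ψ x).1 + u₁ x * (ψ x).2) x ∧
    HasDerivAt (fun y => (ψ y).2) (Complex.I * ζ * (ψ x).2 - u₂ x * (ψ x).1) x

/-- The Lax expression `L(u)φ = (i(φ₁' − u₁φ₂), −i(u₂φ₁ + φ₂'))`. -/
def Lax (u₁ u₂ : ℝ → ℂ) (φ : ℝ → ℂ × ℂ) (x : ℝ) : ℂ × ℂ :=
  (Complex.I * (deriv (fun y => (φ y).1) x - u₁ x * (φ x).2),
   -Complex.I * (u₂ x * (φ x).1 + deriv (fun y => (φ y).2) x))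

/-- The intertwining operator
`D(u,(ζ₁,ζ₂),(ψ₁,ψ₂))φ = (L(u) − ζ₂)φ + (ζ₂ − ζ₁)·(W(ψ₂,φ)/W(ψ₂,ψ₁))·ψ₁`. -/
def Dop (u₁ u₂ : ℝ → ℂ) (ζ₁ ζ₂ : ℂ) (ψ₁ ψ₂ φ : ℝ → ℂ × ℂ) (x : ℝ) : ℂ × ℂ :=
  Lax u₁ u₂ φ x - ζ₂ • φ x + ((ζ₂ - ζ₁) * Wr ψ₂ φ x / Wr ψ₂ ψ₁ x) • ψ₁ x

/-!
Expand `φ = c₁ ψ₁ + c₂ ψ₂` pointwise by Cramer's rule, with `c₁ = W(ψ₂,φ)/W(ψ₂,ψ₁)` and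
`c₂ = W(ψ₁,φ)/W(ψ₁,ψ₂)`. The operator `D(u,(ζ₁,ζ₂),(ψ₁,ψ₂))` then becomes
`φ ↦ L(u)φ - (ζ₁ c₁ ψ₁ + ζ₂ c₂ ψ₂)`, which is symmetric in the two indices. It kills `ψ₂` because
`L(u)ψ₂ = ζ₂ψ₂` and `W(ψ₂,ψ₂) = 0`, hence also `ψ₁` by symmetry.
-/

section

variable {I : Set ℝ} {u₁ u₂ : ℝ → ℂ} {ζ ζ₁ ζ₂ : ℂ} {ψ ψ₁ ψ₂ : ℝ → ℂ × ℂ} {x : ℝ}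

theorem wr_self (φ : ℝ → ℂ × ℂ) (x : ℝ) : Wr φ φ x = 0 :=
  sub_eq_zero.mpr (mul_comm _ _)

theorem neg_wr (φ ψ : ℝ → ℂ × ℂ) (x : ℝ) : -Wr φ ψ x = Wr ψ φ x := by
  simp only [Wr]
  ring

theorem wr_smul_sub_wr_smul (φ ψ₁ ψ₂ : ℝ → ℂ × ℂ) (x : ℝ) :
    Wr ψ₂ φ x • ψ₁ x - Wr ψ₁ φ x • ψ₂ x = Wr ψ₂ ψ₁ x • φ x := by
  ext <;> simp only [Wr, Prod.fst_sub, Prod.snd_sub, Prod.smul_fst, Prod.smul_snd, smul_eq_mul] <;>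
    ring

theorem wr_div_smul_add_wr_div_smul (φ : ℝ → ℂ × ℂ) (hW : Wr ψ₂ ψ₁ x ≠ 0) :
    (Wr ψ₂ φ x / Wr ψ₂ ψ₁ x) • ψ₁ x + (Wr ψ₁ φ x / Wr ψ₁ ψ₂ x) • ψ₂ x = φ x := by
  calc
    _ = (Wr ψ₂ ψ₁ x)⁻¹ • (Wr ψ₂ φ x • ψ₁ x - Wr ψ₁ φ x • ψ₂ x) := by
      rw [← neg_wr ψ₂ ψ₁, div_neg]
      module
    _ = φ x := by rw [wr_smul_sub_wr_smul, inv_smul_smul₀ hW]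

theorem dop_eq_lax_sub (u₁ u₂ : ℝ → ℂ) (ζ₁ ζ₂ : ℂ) (φ : ℝ → ℂ × ℂ) (hW : Wr ψ₂ ψ₁ x ≠ 0) :
    Dop u₁ u₂ ζ₁ ζ₂ ψ₁ ψ₂ φ x =
      Lax u₁ u₂ φ x - ((ζ₁ * (Wr ψ₂ φ x / Wr ψ₂ ψ₁ x)) • ψ₁ x +
        (ζ₂ * (Wr ψ₁ φ x / Wr ψ₁ ψ₂ x)) • ψ₂ x) := by
  rw [Dop, mul_div_assoc]
  linear_combination (norm := module) ζ₂ • wr_div_smul_add_wr_div_smul φ hW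

theorem dop_comm (u₁ u₂ : ℝ → ℂ) (ζ₁ ζ₂ : ℂ) (φ : ℝ → ℂ × ℂ) (hW : Wr ψ₂ ψ₁ x ≠ 0) :
    Dop u₁ u₂ ζ₂ ζ₁ ψ₂ ψ₁ φ x = Dop u₁ u₂ ζ₁ ζ₂ ψ₁ ψ₂ φ x := by
  have hW' : Wr ψ₁ ψ₂ x ≠ 0 := neg_wr ψ₂ ψ₁ x ▸ neg_ne_zero.mpr hW
  rw [dop_eq_lax_sub u₁ u₂ ζ₁ ζ₂ φ hW, dop_eq_lax_sub u₁ u₂ ζ₂ ζ₁ φ hW', add_comm]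

theorem IsWave.lax_eq_smul (h : IsWave I u₁ u₂ ζ ψ) (hx : x ∈ I) :
    Lax u₁ u₂ ψ x = ζ • ψ x := by
  obtain ⟨hfst, hsnd⟩ := h x hx
  ext
  · simp only [Lax, hfst.deriv, Prod.smul_fst, smul_eq_mul]
    linear_combination (-ζ * (ψ x).1) * Complex.I_mul_I
  · simp only [Lax, hsnd.deriv, Prod.smul_snd, smul_eq_mul]
    linear_combination (-ζ * (ψ x).2) * Complex.I_mul_I

theorem IsWave.dop_right_eq_zero (h₂ : IsWave I u₁ u₂ ζ₂ ψ₂) (hx : x ∈ I) (ζ₁ : ℂ)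
    (ψ₁ : ℝ → ℂ × ℂ) : Dop u₁ u₂ ζ₁ ζ₂ ψ₁ ψ₂ ψ₂ x = 0 := by
  rw [Dop, h₂.lax_eq_smul hx, wr_self, mul_zero, zero_div, zero_smul, sub_self, add_zero]

theorem IsWave.dop_left_eq_zero (h₁ : IsWave I u₁ u₂ ζ₁ ψ₁) (hx : x ∈ I) (ζ₂ : ℂ)
    (hW : Wr ψ₂ ψ₁ x ≠ 0) : Dop u₁ u₂ ζ₁ ζ₂ ψ₁ ψ₂ ψ₁ x = 0 := by
  rw [← dop_comm u₁ u₂ ζ₁ ζ₂ ψ₁ hW, h₁.dop_right_eq_zero hx]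

theorem statement0_general (h₁ : IsWave I u₁ u₂ ζ₁ ψ₁) (h₂ : IsWave I u₁ u₂ ζ₂ ψ₂)
    (hW : ∀ x ∈ I, Wr ψ₂ ψ₁ x ≠ 0) :
    (∀ x ∈ I, Dop u₁ u₂ ζ₁ ζ₂ ψ₁ ψ₂ ψ₁ x = 0 ∧ Dop u₁ u₂ ζ₁ ζ₂ ψ₁ ψ₂ ψ₂ x = 0) ∧
    (∀ φ : ℝ → ℂ × ℂ,
      (∀ x ∈ I, DifferentiableAt ℝ (fun y => (φ y).1) x ∧
                 DifferentiableAt ℝ (fun y => (φ y).2) x) →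
      ∀ x ∈ I, Dop u₁ u₂ ζ₂ ζ₁ ψ₂ ψ₁ φ x = Dop u₁ u₂ ζ₁ ζ₂ ψ₁ ψ₂ φ x) :=
  ⟨fun x hx => ⟨h₁.dop_left_eq_zero hx ζ₂ (hW x hx), h₂.dop_right_eq_zero hx ζ₁ ψ₁⟩,
    fun φ _ x hx => dop_comm u₁ u₂ ζ₁ ζ₂ φ (hW x hx)⟩

end

/-- on an open interval `I`, if `ψ₁` is a `ζ₁`-wave and `ψ₂` a `ζ₂`-wave
for `u` with nowhere vanishing Wronskian `W(ψ₂,ψ₁)`, then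
(i) `D(u,(ζ₁,ζ₂),(ψ₁,ψ₂))` annihilates `ψ₁` and `ψ₂` on `I`, and
(ii) the intertwining operator is symmetric under exchanging the indices. -/
theorem statement0 (a b : ℝ) (I : Set ℝ) (hI : I = Set.Ioo a b)
    (u₁ u₂ : ℝ → ℂ) (ζ₁ ζ₂ : ℂ) (hζ : ζ₁ ≠ ζ₂)
    (ψ₁ ψ₂ : ℝ → ℂ × ℂ)
    (h₁ : IsWave I u₁ u₂ ζ₁ ψ₁) (h₂ : IsWave I u₁ u₂ ζ₂ ψ₂)
    (hW : ∀ x ∈ I, Wr ψ₂ ψ₁ x ≠ 0) :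
    (∀ x ∈ I, Dop u₁ u₂ ζ₁ ζ₂ ψ₁ ψ₂ ψ₁ x = 0 ∧ Dop u₁ u₂ ζ₁ ζ₂ ψ₁ ψ₂ ψ₂ x = 0) ∧
    (∀ φ : ℝ → ℂ × ℂ,
      (∀ x ∈ I, DifferentiableAt ℝ (fun y => (φ y).1) x ∧
                 DifferentiableAt ℝ (fun y => (φ y).2) x) →
      ∀ x ∈ I, Dop u₁ u₂ ζ₂ ζ₁ ψ₂ ψ₁ φ x = Dop u₁ u₂ ζ₁ ζ₂ ψ₁ ψ₂ φ x) := by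
  exact statement0_general h₁ h₂ hW
end
end

section
/- Let I ⊆ ℝ be an open interval, u = (u₁,u₂) a pair of differentiable functions I → ℂ, ζ₁ ≠ ζ₂ complex numbers, ψ₁ a ζ₁-wave and ψ₂ a ζ₂-wave for u with W(ψ₂,ψ₁) nowhere vanishing on I, and set v = B(u,(ζ₁,ζ₂),(ψ₁,ψ₂)). Then the intertwining relation L(v)(Dφ) = D(L(u)φ) holds on I for every twice differentiable φ : I → ℂ², where D = D(u,(ζ₁,ζ₂),(ψ₁,ψ₂)). -/
/-!
Write `d = D φ = L(u)φ - ζ₂ φ + q ψ₁`, `κ = (ζ₂ - ζ₁) / W(ψ₂,ψ₁)`, `σ₃ = diag(1,-1)` and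
`S(φ,ψ) = φ₁ψ₂ + φ₂ψ₁`. The relation comes from three identities:

* `L(v)χ = L(u)χ + κ (W(ψ₂,χ) ψ₁ + S(ψ₂,χ) σ₃ψ₁)` for every `χ`;
* `L(u)(q ψ₁) = ζ₁ q ψ₁ + i q' σ₃ψ₁`, where `q' = i κ S(ψ₂,d)` by the Lagrange identity
  `W(φ,ψ)' = i (S(φ,L(u)ψ) - S(L(u)φ,ψ))`;
* `W(ψ₂,d) = W(ψ₂,L(u)φ) - ζ₁ W(ψ₂,φ)`.

In `L(v)d` the two `σ₃ψ₁` terms therefore cancel, and the terms `ζ₁ q ψ₁` and `κ W(ψ₂,d) ψ₁` add up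
to `κ W(ψ₂,L(u)φ) ψ₁`, which is the rank-one term of `D(L(u)φ)`.
-/

noncomputable section

/-- The symmetric companion `S(φ,ψ) = φ₁ψ₂ + φ₂ψ₁` of the Wronskian, which occurs in the Lagrange
identity of the Lax expression. -/
def symmPairing (φ ψ : ℝ → ℂ × ℂ) (x : ℝ) : ℂ := (φ x).1 * (ψ x).2 + (φ x).2 * (ψ x).1

/-- The third Pauli matrix `σ₃ = diag(1,-1)` acting on `ℂ²`; up to the factor `i` it is the leading
coefficient of the Lax expression. -/
def pauliThree (p : ℂ × ℂ) : ℂ × ℂ := (p.1, -p.2)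

/-- The coefficient `q = (ζ₂ - ζ₁) W(ψ₂,φ) / W(ψ₂,ψ₁)` of `ψ₁` in `D φ`. -/
def dressingCoeff (ζ₁ ζ₂ : ℂ) (ψ₁ ψ₂ φ : ℝ → ℂ × ℂ) (x : ℝ) : ℂ :=
  (ζ₂ - ζ₁) * Wr ψ₂ φ x / Wr ψ₂ ψ₁ x

/-- The Bäcklund transform `B(u,(ζ₁,ζ₂),(ψ₁,ψ₂))`, as a pair of functions on all of `ℝ`; it is
meaningful where `W(ψ₂,ψ₁)` does not vanish. -/
def backlund (u₁ u₂ : ℝ → ℂ) (ζ₁ ζ₂ : ℂ) (ψ₁ ψ₂ : ℝ → ℂ × ℂ) : (ℝ → ℂ) × (ℝ → ℂ) :=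
  (fun x => u₁ x + 2 * Complex.I * (ζ₂ - ζ₁) * (ψ₁ x).1 * (ψ₂ x).1 / Wr ψ₂ ψ₁ x,
   fun x => u₂ x - 2 * Complex.I * (ζ₂ - ζ₁) * (ψ₁ x).2 * (ψ₂ x).2 / Wr ψ₂ ψ₁ x)

section Lax

variable {u₁ u₂ : ℝ → ℂ} {φ ψ : ℝ → ℂ × ℂ} {x : ℝ}

lemma lax_add (hφ : DifferentiableAt ℝ φ x) (hψ : DifferentiableAt ℝ ψ x) :
    Lax u₁ u₂ (φ + ψ) x = Lax u₁ u₂ φ x + Lax u₁ u₂ ψ x := by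
  ext
  · simp only [Lax, Pi.add_apply, Prod.fst_add, Prod.snd_add, deriv_fun_add hφ.fst hψ.fst]
    ring
  · simp only [Lax, Pi.add_apply, Prod.fst_add, Prod.snd_add, deriv_fun_add hφ.snd hψ.snd]
    ring

lemma lax_const_smul (c : ℂ) (φ : ℝ → ℂ × ℂ) (x : ℝ) :
    Lax u₁ u₂ (c • φ) x = c • Lax u₁ u₂ φ x := by
  ext
  · simp only [Lax, Pi.smul_apply, Prod.smul_fst, Prod.smul_snd, smul_eq_mul,
      deriv_const_mul_field]
    ring
  · simp only [Lax, Pi.smul_apply, Prod.smul_fst, Prod.smul_snd, smul_eq_mul,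
      deriv_const_mul_field]
    ring

lemma lax_sub (hφ : DifferentiableAt ℝ φ x) (hψ : DifferentiableAt ℝ ψ x) :
    Lax u₁ u₂ (φ - ψ) x = Lax u₁ u₂ φ x - Lax u₁ u₂ ψ x := by
  rw [sub_eq_add_neg, lax_add hφ hψ.neg, ← neg_one_smul ℂ ψ, lax_const_smul]
  module

lemma lax_smul {q : ℝ → ℂ} {q' : ℂ} (hq : HasDerivAt q q' x) (hφ : DifferentiableAt ℝ φ x) :
    Lax u₁ u₂ (q • φ) x = q x • Lax u₁ u₂ φ x + (Complex.I * q') • pauliThree (φ x) := by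
  ext
  · simp only [Lax, pauliThree, Pi.smul_apply', Prod.smul_fst, Prod.smul_snd, Prod.fst_add,
      smul_eq_mul, (hq.fun_mul hφ.fst.hasDerivAt).deriv]
    ring
  · simp only [Lax, pauliThree, Pi.smul_apply', Prod.smul_fst, Prod.smul_snd, Prod.snd_add,
      smul_eq_mul, (hq.fun_mul hφ.snd.hasDerivAt).deriv]
    ring

lemma differentiableAt_lax (hu₁ : DifferentiableAt ℝ u₁ x) (hu₂ : DifferentiableAt ℝ u₂ x)
    (hφ : DifferentiableAt ℝ φ x) (hφ₁ : DifferentiableAt ℝ (deriv fun y => (φ y).1) x)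
    (hφ₂ : DifferentiableAt ℝ (deriv fun y => (φ y).2) x) :
    DifferentiableAt ℝ (Lax u₁ u₂ φ) x :=
  ((hφ₁.fun_sub (hu₁.fun_mul hφ.snd)).const_mul Complex.I).prodMk
    (((hu₂.fun_mul hφ.fst).fun_add hφ₂).const_mul (-Complex.I))

lemma deriv_fst_eq_lax (u₁ u₂ : ℝ → ℂ) (φ : ℝ → ℂ × ℂ) (x : ℝ) :
    deriv (fun y => (φ y).1) x = u₁ x * (φ x).2 - Complex.I * (Lax u₁ u₂ φ x).1 := by
  simp only [Lax]
  linear_combination (deriv (fun y => (φ y).1) x - u₁ x * (φ x).2) * Complex.I_mul_I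

lemma deriv_snd_eq_lax (u₁ u₂ : ℝ → ℂ) (φ : ℝ → ℂ × ℂ) (x : ℝ) :
    deriv (fun y => (φ y).2) x = Complex.I * (Lax u₁ u₂ φ x).2 - u₂ x * (φ x).1 := by
  simp only [Lax]
  linear_combination (u₂ x * (φ x).1 + deriv (fun y => (φ y).2) x) * Complex.I_mul_I

lemma hasDerivAt_wr (u₁ u₂ : ℝ → ℂ) (hφ : DifferentiableAt ℝ φ x)
    (hψ : DifferentiableAt ℝ ψ x) :
    HasDerivAt (Wr φ ψ)
      (Complex.I * (symmPairing φ (Lax u₁ u₂ ψ) x - symmPairing (Lax u₁ u₂ φ) ψ x)) x := by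
  refine ((hφ.fst.hasDerivAt.fun_mul hψ.snd.hasDerivAt).fun_sub
    (hφ.snd.hasDerivAt.fun_mul hψ.fst.hasDerivAt)).congr_deriv ?_
  simp only [symmPairing, deriv_fst_eq_lax u₁ u₂, deriv_snd_eq_lax u₁ u₂]
  ring

end Lax

namespace IsWave

variable {I : Set ℝ} {u₁ u₂ : ℝ → ℂ} {ζ : ℂ} {φ ψ : ℝ → ℂ × ℂ} {x : ℝ}

lemma differentiableAt (h : IsWave I u₁ u₂ ζ ψ) (hx : x ∈ I) : DifferentiableAt ℝ ψ x :=
  (h x hx).1.differentiableAt.prodMk (h x hx).2.differentiableAt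

lemma lax_eq (h : IsWave I u₁ u₂ ζ ψ) (hx : x ∈ I) : Lax u₁ u₂ ψ x = ζ • ψ x := by
  ext
  · simp only [Lax, (h x hx).1.deriv, Prod.smul_fst, smul_eq_mul]
    linear_combination -ζ * (ψ x).1 * Complex.I_mul_I
  · simp only [Lax, (h x hx).2.deriv, Prod.smul_snd, smul_eq_mul]
    linear_combination -ζ * (ψ x).2 * Complex.I_mul_I

lemma hasDerivAt_wr (h : IsWave I u₁ u₂ ζ ψ) (hx : x ∈ I) (hφ : DifferentiableAt ℝ φ x) :
    HasDerivAt (Wr ψ φ)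
      (Complex.I * (symmPairing ψ (Lax u₁ u₂ φ) x - ζ * symmPairing ψ φ x)) x := by
  refine (_root_.hasDerivAt_wr u₁ u₂ (h.differentiableAt hx) hφ).congr_deriv ?_
  simp only [symmPairing, h.lax_eq hx, Prod.smul_fst, Prod.smul_snd, smul_eq_mul]
  ring

end IsWave

section Intertwining

variable {I : Set ℝ} {u₁ u₂ : ℝ → ℂ} {ζ₁ ζ₂ : ℂ} {ψ₁ ψ₂ φ : ℝ → ℂ × ℂ} {x : ℝ}

lemma dop_eq_lax_sub_add_smul (u₁ u₂ : ℝ → ℂ) (ζ₁ ζ₂ : ℂ) (ψ₁ ψ₂ φ : ℝ → ℂ × ℂ) :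
    Dop u₁ u₂ ζ₁ ζ₂ ψ₁ ψ₂ φ =
      Lax u₁ u₂ φ - ζ₂ • φ + dressingCoeff ζ₁ ζ₂ ψ₁ ψ₂ φ • ψ₁ :=
  rfl

lemma lax_backlund (u₁ u₂ : ℝ → ℂ) (ζ₁ ζ₂ : ℂ) (ψ₁ ψ₂ φ : ℝ → ℂ × ℂ) (x : ℝ) :
    Lax (backlund u₁ u₂ ζ₁ ζ₂ ψ₁ ψ₂).1 (backlund u₁ u₂ ζ₁ ζ₂ ψ₁ ψ₂).2 φ x =
      Lax u₁ u₂ φ x + ((ζ₂ - ζ₁) / Wr ψ₂ ψ₁ x) •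
        (Wr ψ₂ φ x • ψ₁ x + symmPairing ψ₂ φ x • pauliThree (ψ₁ x)) := by
  have hWr : Wr ψ₂ φ x = (ψ₂ x).1 * (φ x).2 - (ψ₂ x).2 * (φ x).1 := rfl
  ext
  · simp only [Lax, backlund, symmPairing, pauliThree, hWr, Prod.fst_add, Prod.smul_fst,
      smul_eq_mul]
    linear_combination -2 * (ζ₂ - ζ₁) / Wr ψ₂ ψ₁ x * (ψ₁ x).1 * (ψ₂ x).1 * (φ x).2 *
      Complex.I_mul_I
  · simp only [Lax, backlund, symmPairing, pauliThree, hWr, Prod.snd_add, Prod.smul_snd,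
      smul_eq_mul]
    linear_combination 2 * (ζ₂ - ζ₁) / Wr ψ₂ ψ₁ x * (ψ₁ x).2 * (ψ₂ x).2 * (φ x).1 *
      Complex.I_mul_I

lemma wr_dop (hW : Wr ψ₂ ψ₁ x ≠ 0) :
    Wr ψ₂ (Dop u₁ u₂ ζ₁ ζ₂ ψ₁ ψ₂ φ) x = Wr ψ₂ (Lax u₁ u₂ φ) x - ζ₁ * Wr ψ₂ φ x := by
  have hq : dressingCoeff ζ₁ ζ₂ ψ₁ ψ₂ φ x * Wr ψ₂ ψ₁ x = (ζ₂ - ζ₁) * Wr ψ₂ φ x :=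
    div_mul_cancel₀ _ hW
  simp only [dop_eq_lax_sub_add_smul, Wr, Pi.add_apply, Pi.sub_apply, Pi.smul_apply,
    Pi.smul_apply', Prod.fst_add, Prod.snd_add, Prod.fst_sub, Prod.snd_sub, Prod.smul_fst,
    Prod.smul_snd, smul_eq_mul] at hq ⊢
  linear_combination hq

lemma symmPairing_dop :
    symmPairing ψ₂ (Dop u₁ u₂ ζ₁ ζ₂ ψ₁ ψ₂ φ) x =
      symmPairing ψ₂ (Lax u₁ u₂ φ) x - ζ₂ * symmPairing ψ₂ φ x +
        dressingCoeff ζ₁ ζ₂ ψ₁ ψ₂ φ x * symmPairing ψ₂ ψ₁ x := by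
  simp only [dop_eq_lax_sub_add_smul, symmPairing, Pi.add_apply, Pi.sub_apply, Pi.smul_apply,
    Pi.smul_apply', Prod.fst_add, Prod.snd_add, Prod.fst_sub, Prod.snd_sub, Prod.smul_fst,
    Prod.smul_snd, smul_eq_mul]
  ring

lemma hasDerivAt_dressingCoeff (h₁ : IsWave I u₁ u₂ ζ₁ ψ₁) (h₂ : IsWave I u₁ u₂ ζ₂ ψ₂)
    (hx : x ∈ I) (hW : Wr ψ₂ ψ₁ x ≠ 0) (hφ : DifferentiableAt ℝ φ x) :
    HasDerivAt (dressingCoeff ζ₁ ζ₂ ψ₁ ψ₂ φ)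
      (Complex.I * ((ζ₂ - ζ₁) / Wr ψ₂ ψ₁ x) *
        symmPairing ψ₂ (Dop u₁ u₂ ζ₁ ζ₂ ψ₁ ψ₂ φ) x) x := by
  have hψ₁ : symmPairing ψ₂ (Lax u₁ u₂ ψ₁) x = ζ₁ * symmPairing ψ₂ ψ₁ x := by
    simp only [symmPairing, h₁.lax_eq hx, Prod.smul_fst, Prod.smul_snd, smul_eq_mul]
    ring
  refine (((h₂.hasDerivAt_wr hx hφ).const_mul (ζ₂ - ζ₁)).fun_div
    (h₂.hasDerivAt_wr hx (h₁.differentiableAt hx)) hW).congr_deriv ?_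
  rw [symmPairing_dop, hψ₁, dressingCoeff]
  field_simp
  ring

lemma lax_dop (h₁ : IsWave I u₁ u₂ ζ₁ ψ₁) (h₂ : IsWave I u₁ u₂ ζ₂ ψ₂)
    (hx : x ∈ I) (hW : Wr ψ₂ ψ₁ x ≠ 0) (hφ : DifferentiableAt ℝ φ x)
    (hLφ : DifferentiableAt ℝ (Lax u₁ u₂ φ) x) :
    Lax u₁ u₂ (Dop u₁ u₂ ζ₁ ζ₂ ψ₁ ψ₂ φ) x =
      Lax u₁ u₂ (Lax u₁ u₂ φ) x - ζ₂ • Lax u₁ u₂ φ x +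
        (ζ₁ * dressingCoeff ζ₁ ζ₂ ψ₁ ψ₂ φ x) • ψ₁ x -
        ((ζ₂ - ζ₁) / Wr ψ₂ ψ₁ x * symmPairing ψ₂ (Dop u₁ u₂ ζ₁ ζ₂ ψ₁ ψ₂ φ) x) •
          pauliThree (ψ₁ x) := by
  have hψ₁ := h₁.differentiableAt hx
  have hq := hasDerivAt_dressingCoeff h₁ h₂ hx hW hφ
  have hζφ : DifferentiableAt ℝ (ζ₂ • φ) x := hφ.const_smul ζ₂
  have hqψ₁ : DifferentiableAt ℝ (dressingCoeff ζ₁ ζ₂ ψ₁ ψ₂ φ • ψ₁) x :=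
    hq.differentiableAt.smul hψ₁
  conv_lhs => rw [dop_eq_lax_sub_add_smul]
  rw [lax_add (hLφ.sub hζφ) hqψ₁, lax_sub hLφ hζφ, lax_const_smul, lax_smul hq hψ₁, h₁.lax_eq hx,
    mul_assoc Complex.I, ← mul_assoc Complex.I, Complex.I_mul_I]
  module

theorem statement1_general (h₁ : IsWave I u₁ u₂ ζ₁ ψ₁) (h₂ : IsWave I u₁ u₂ ζ₂ ψ₂)
    (hx : x ∈ I) (hW : Wr ψ₂ ψ₁ x ≠ 0) (hφ : DifferentiableAt ℝ φ x)
    (hLφ : DifferentiableAt ℝ (Lax u₁ u₂ φ) x) :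
    Lax (backlund u₁ u₂ ζ₁ ζ₂ ψ₁ ψ₂).1 (backlund u₁ u₂ ζ₁ ζ₂ ψ₁ ψ₂).2
        (Dop u₁ u₂ ζ₁ ζ₂ ψ₁ ψ₂ φ) x =
      Dop u₁ u₂ ζ₁ ζ₂ ψ₁ ψ₂ (Lax u₁ u₂ φ) x := by
  rw [lax_backlund, lax_dop h₁ h₂ hx hW hφ hLφ, wr_dop hW, Dop, dressingCoeff]
  module

end Intertwining

/-- with `v = B(u,(ζ₁,ζ₂),(ψ₁,ψ₂))` the Bäcklund transform, the
intertwining relation `L(v)(Dφ) = D(L(u)φ)` holds on `I` for every twice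
differentiable `φ`, where `D = D(u,(ζ₁,ζ₂),(ψ₁,ψ₂))`. -/
theorem statement1 (a b : ℝ) (I : Set ℝ) (hI : I = Set.Ioo a b)
    (u₁ u₂ : ℝ → ℂ)
    (hu : ∀ x ∈ I, DifferentiableAt ℝ u₁ x ∧ DifferentiableAt ℝ u₂ x)
    (ζ₁ ζ₂ : ℂ) (hζ : ζ₁ ≠ ζ₂)
    (ψ₁ ψ₂ : ℝ → ℂ × ℂ)
    (h₁ : IsWave I u₁ u₂ ζ₁ ψ₁) (h₂ : IsWave I u₁ u₂ ζ₂ ψ₂)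
    (hW : ∀ x ∈ I, Wr ψ₂ ψ₁ x ≠ 0)
    (v₁ v₂ : ℝ → ℂ)
    (hv₁ : ∀ x, v₁ x = u₁ x + 2 * Complex.I * (ζ₂ - ζ₁) * (ψ₁ x).1 * (ψ₂ x).1 / Wr ψ₂ ψ₁ x)
    (hv₂ : ∀ x, v₂ x = u₂ x - 2 * Complex.I * (ζ₂ - ζ₁) * (ψ₁ x).2 * (ψ₂ x).2 / Wr ψ₂ ψ₁ x)
    (φ : ℝ → ℂ × ℂ)
    (hφ : ∀ x ∈ I,
      DifferentiableAt ℝ (fun y => (φ y).1) x ∧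
      DifferentiableAt ℝ (fun y => (φ y).2) x ∧
      DifferentiableAt ℝ (deriv (fun y => (φ y).1)) x ∧
      DifferentiableAt ℝ (deriv (fun y => (φ y).2)) x) :
    ∀ x ∈ I,
      Lax v₁ v₂ (Dop u₁ u₂ ζ₁ ζ₂ ψ₁ ψ₂ φ) x
        = Dop u₁ u₂ ζ₁ ζ₂ ψ₁ ψ₂ (Lax u₁ u₂ φ) x := by
  obtain rfl : v₁ = (backlund u₁ u₂ ζ₁ ζ₂ ψ₁ ψ₂).1 := funext hv₁
  obtain rfl : v₂ = (backlund u₁ u₂ ζ₁ ζ₂ ψ₁ ψ₂).2 := funext hv₂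
  intro x hx
  obtain ⟨hφ₁, hφ₂, hφ₁', hφ₂'⟩ := hφ x hx
  exact statement1_general h₁ h₂ hx (hW x hx) (hφ₁.prodMk hφ₂)
    (differentiableAt_lax (hu x hx).1 (hu x hx).2 (hφ₁.prodMk hφ₂) hφ₁' hφ₂')
end
end

section
/- Let I ⊆ ℝ be an open interval, u = (u₁,u₂) a pair of functions I → ℂ, ζ₁ ≠ ζ₂ complex numbers, ψ₁ a ζ₁-wave and ψ₂ a ζ₂-wave for u with W(ψ₂,ψ₁) nowhere vanishing on I, and set v = B(u,(ζ₁,ζ₂),(ψ₁,ψ₂)). Then for every z ∈ ℂ, the intertwining operator D(u,(ζ₁,ζ₂),(ψ₁,ψ₂)) maps z-waves for u to z-waves for v: if φ is a z-wave for u on I, then Dφ = (z − ζ₂)φ + (ζ₂ − ζ₁)(W(ψ₂,φ)/W(ψ₂,ψ₁))ψ₁ is a z-wave for v on I. -/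
/-!
For a `z`-wave `φ` and a `w`-wave `ψ` the potential cancels from the derivative of the Wronskian:
`W(φ,ψ)' = i(w − z)S(φ,ψ)`, where `S(φ,ψ) = φ₁ψ₂ + φ₂ψ₁`. Write `Dφ = (z − ζ₂)φ + rψ₁` with
`r = (ζ₂ − ζ₁)W(ψ₂,φ)/W(ψ₂,ψ₁)`. The quotient rule and the linearity of `S(ψ₂,·)` give
`r' = i(ζ₂ − ζ₁)S(ψ₂,Dφ)/W(ψ₂,ψ₁)`. Since `W(ψ₂,Dφ) = (z − ζ₁)W(ψ₂,φ)` and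
`S(ψ₂,Dφ) = 2ψ₂,₁(Dφ)₂ − W(ψ₂,Dφ) = 2ψ₂,₂(Dφ)₁ + W(ψ₂,Dφ)`, this can be rewritten as
`r' = ∓i(z − ζ₁)r + 2i(ζ₂ − ζ₁)ψ₂,ₖ(Dφ)ₗ/W(ψ₂,ψ₁)` with `(k,l) = (1,2)` or `(2,1)`. In the `k`-th
component of `(Dφ)'` the first term turns the spectral parameter `ζ₁` of `ψ₁` into `z`, and the
second is the change of potential from `u` to `v`.
-/

noncomputable section

/-- The symmetric companion `S(φ,ψ) = φ₁ψ₂ + φ₂ψ₁` of the Wronskian, through which the derivatives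
of Wronskians of waves are expressed. -/
def symWr (φ ψ : ℝ → ℂ × ℂ) (x : ℝ) : ℂ := (φ x).1 * (ψ x).2 + (φ x).2 * (ψ x).1

/-- The coefficient `(ζ₂ − ζ₁)W(ψ₂,φ)/W(ψ₂,ψ₁)` of `ψ₁` in the intertwining operator `Dop`; it is
meaningful only where `W(ψ₂,ψ₁)` does not vanish. -/
def dopCoeff (ζ₁ ζ₂ : ℂ) (ψ₁ ψ₂ φ : ℝ → ℂ × ℂ) (x : ℝ) : ℂ :=
  (ζ₂ - ζ₁) * Wr ψ₂ φ x / Wr ψ₂ ψ₁ x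

/-- The first-order form of the intertwining operator `Dop` on a `z`-wave `φ`, where the Lax
expression of `φ` has been replaced by `zφ`. -/
def dopWave (z ζ₁ ζ₂ : ℂ) (ψ₁ ψ₂ φ : ℝ → ℂ × ℂ) (x : ℝ) : ℂ × ℂ :=
  (z - ζ₂) • φ x + dopCoeff ζ₁ ζ₂ ψ₁ ψ₂ φ x • ψ₁ x

section

variable {I : Set ℝ} {u₁ u₂ : ℝ → ℂ} {z w ζ₁ ζ₂ : ℂ} {φ ψ ψ₁ ψ₂ : ℝ → ℂ × ℂ} {x : ℝ}

theorem symWr_eq_two_mul_fst_mul_snd_sub_Wr (φ ψ : ℝ → ℂ × ℂ) (x : ℝ) :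
    symWr φ ψ x = 2 * ((φ x).1 * (ψ x).2) - Wr φ ψ x := by
  unfold symWr Wr
  ring

theorem symWr_eq_two_mul_snd_mul_fst_add_Wr (φ ψ : ℝ → ℂ × ℂ) (x : ℝ) :
    symWr φ ψ x = 2 * ((φ x).2 * (ψ x).1) + Wr φ ψ x := by
  unfold symWr Wr
  ring

theorem dopWave_fst (z ζ₁ ζ₂ : ℂ) (ψ₁ ψ₂ φ : ℝ → ℂ × ℂ) (x : ℝ) :
    (dopWave z ζ₁ ζ₂ ψ₁ ψ₂ φ x).1 =
      (z - ζ₂) * (φ x).1 + dopCoeff ζ₁ ζ₂ ψ₁ ψ₂ φ x * (ψ₁ x).1 :=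
  rfl

theorem dopWave_snd (z ζ₁ ζ₂ : ℂ) (ψ₁ ψ₂ φ : ℝ → ℂ × ℂ) (x : ℝ) :
    (dopWave z ζ₁ ζ₂ ψ₁ ψ₂ φ x).2 =
      (z - ζ₂) * (φ x).2 + dopCoeff ζ₁ ζ₂ ψ₁ ψ₂ φ x * (ψ₁ x).2 :=
  rfl

theorem symWr_dopWave (z ζ₁ ζ₂ : ℂ) (ψ ψ₁ ψ₂ φ : ℝ → ℂ × ℂ) (x : ℝ) :
    symWr ψ (dopWave z ζ₁ ζ₂ ψ₁ ψ₂ φ) x =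
      (z - ζ₂) * symWr ψ φ x + dopCoeff ζ₁ ζ₂ ψ₁ ψ₂ φ x * symWr ψ ψ₁ x := by
  simp only [symWr, dopWave_fst, dopWave_snd]
  ring

theorem Wr_dopWave (z ζ₁ ζ₂ : ℂ) (ψ ψ₁ ψ₂ φ : ℝ → ℂ × ℂ) (x : ℝ) :
    Wr ψ (dopWave z ζ₁ ζ₂ ψ₁ ψ₂ φ) x =
      (z - ζ₂) * Wr ψ φ x + dopCoeff ζ₁ ζ₂ ψ₁ ψ₂ φ x * Wr ψ ψ₁ x := by
  simp only [Wr, dopWave_fst, dopWave_snd]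
  ring

theorem Wr_dopWave_self (z ζ₁ ζ₂ : ℂ) (φ : ℝ → ℂ × ℂ) (hW : Wr ψ₂ ψ₁ x ≠ 0) :
    Wr ψ₂ (dopWave z ζ₁ ζ₂ ψ₁ ψ₂ φ) x = (z - ζ₁) * Wr ψ₂ φ x := by
  rw [Wr_dopWave, dopCoeff, div_mul_cancel₀ _ hW]
  ring

theorem mul_symWr_dopWave_div_eq_fst (z ζ₁ ζ₂ : ℂ) (φ : ℝ → ℂ × ℂ) (hW : Wr ψ₂ ψ₁ x ≠ 0) :
    Complex.I * (ζ₂ - ζ₁) * symWr ψ₂ (dopWave z ζ₁ ζ₂ ψ₁ ψ₂ φ) x / Wr ψ₂ ψ₁ x =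
      -Complex.I * (z - ζ₁) * dopCoeff ζ₁ ζ₂ ψ₁ ψ₂ φ x +
        2 * Complex.I * (ζ₂ - ζ₁) * (ψ₂ x).1 * (dopWave z ζ₁ ζ₂ ψ₁ ψ₂ φ x).2 / Wr ψ₂ ψ₁ x := by
  rw [symWr_eq_two_mul_fst_mul_snd_sub_Wr, Wr_dopWave_self z ζ₁ ζ₂ φ hW, dopCoeff]
  ring

theorem mul_symWr_dopWave_div_eq_snd (z ζ₁ ζ₂ : ℂ) (φ : ℝ → ℂ × ℂ) (hW : Wr ψ₂ ψ₁ x ≠ 0) :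
    Complex.I * (ζ₂ - ζ₁) * symWr ψ₂ (dopWave z ζ₁ ζ₂ ψ₁ ψ₂ φ) x / Wr ψ₂ ψ₁ x =
      Complex.I * (z - ζ₁) * dopCoeff ζ₁ ζ₂ ψ₁ ψ₂ φ x +
        2 * Complex.I * (ζ₂ - ζ₁) * (ψ₂ x).2 * (dopWave z ζ₁ ζ₂ ψ₁ ψ₂ φ x).1 / Wr ψ₂ ψ₁ x := by
  rw [symWr_eq_two_mul_snd_mul_fst_add_Wr, Wr_dopWave_self z ζ₁ ζ₂ φ hW, dopCoeff]
  ring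

theorem IsWave.hasDerivAt_Wr (hφ : IsWave I u₁ u₂ z φ) (hψ : IsWave I u₁ u₂ w ψ) (hx : x ∈ I) :
    HasDerivAt (Wr φ ψ) (Complex.I * (w - z) * symWr φ ψ x) x := by
  obtain ⟨hφ_fst, hφ_snd⟩ := hφ x hx
  obtain ⟨hψ_fst, hψ_snd⟩ := hψ x hx
  refine ((hφ_fst.mul hψ_snd).sub (hφ_snd.mul hψ_fst)).congr_deriv ?_
  unfold symWr
  ring

theorem IsWave.hasDerivAt_dopCoeff (hφ : IsWave I u₁ u₂ z φ) (h₁ : IsWave I u₁ u₂ ζ₁ ψ₁)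
    (h₂ : IsWave I u₁ u₂ ζ₂ ψ₂) (hx : x ∈ I) (hW : Wr ψ₂ ψ₁ x ≠ 0) :
    HasDerivAt (dopCoeff ζ₁ ζ₂ ψ₁ ψ₂ φ)
      (Complex.I * (ζ₂ - ζ₁) * symWr ψ₂ (dopWave z ζ₁ ζ₂ ψ₁ ψ₂ φ) x / Wr ψ₂ ψ₁ x) x := by
  have hquot := ((h₂.hasDerivAt_Wr hφ hx).const_mul (ζ₂ - ζ₁)).div (h₂.hasDerivAt_Wr h₁ hx) hW
  refine hquot.congr_deriv ?_
  rw [symWr_dopWave, dopCoeff]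
  field_simp
  ring

end

theorem statement2_general {I : Set ℝ} {u₁ u₂ v₁ v₂ : ℝ → ℂ} {z ζ₁ ζ₂ : ℂ}
    {φ ψ₁ ψ₂ : ℝ → ℂ × ℂ}
    (h₁ : IsWave I u₁ u₂ ζ₁ ψ₁) (h₂ : IsWave I u₁ u₂ ζ₂ ψ₂) (hW : ∀ x ∈ I, Wr ψ₂ ψ₁ x ≠ 0)
    (hv₁ : ∀ x ∈ I,
      v₁ x = u₁ x + 2 * Complex.I * (ζ₂ - ζ₁) * (ψ₁ x).1 * (ψ₂ x).1 / Wr ψ₂ ψ₁ x)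
    (hv₂ : ∀ x ∈ I,
      v₂ x = u₂ x - 2 * Complex.I * (ζ₂ - ζ₁) * (ψ₁ x).2 * (ψ₂ x).2 / Wr ψ₂ ψ₁ x)
    (hφ : IsWave I u₁ u₂ z φ) :
    IsWave I v₁ v₂ z (dopWave z ζ₁ ζ₂ ψ₁ ψ₂ φ) := by
  intro x hx
  obtain ⟨hφ_fst, hφ_snd⟩ := hφ x hx
  obtain ⟨hψ₁_fst, hψ₁_snd⟩ := h₁ x hx
  have hcoeff := hφ.hasDerivAt_dopCoeff h₁ h₂ hx (hW x hx)
  constructor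
  · refine ((hφ_fst.const_mul (z - ζ₂)).add (hcoeff.mul hψ₁_fst)).congr_deriv ?_
    rw [mul_symWr_dopWave_div_eq_fst z ζ₁ ζ₂ φ (hW x hx), hv₁ x hx, dopWave_fst, dopWave_snd]
    ring
  · refine ((hφ_snd.const_mul (z - ζ₂)).add (hcoeff.mul hψ₁_snd)).congr_deriv ?_
    rw [mul_symWr_dopWave_div_eq_snd z ζ₁ ζ₂ φ (hW x hx), hv₂ x hx, dopWave_fst, dopWave_snd]
    ring

/-- with `v = B(u,(ζ₁,ζ₂),(ψ₁,ψ₂))` the Bäcklund transform, for every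
`z ∈ ℂ` the intertwining operator maps `z`-waves for `u` to `z`-waves for `v`:
if `φ` is a `z`-wave for `u` on `I` then
`Dφ = (z − ζ₂)φ + (ζ₂ − ζ₁)(W(ψ₂,φ)/W(ψ₂,ψ₁))ψ₁` is a `z`-wave for `v` on `I`. -/
theorem statement2 (a b : ℝ) (I : Set ℝ) (hI : I = Set.Ioo a b)
    (u₁ u₂ : ℝ → ℂ) (ζ₁ ζ₂ : ℂ) (hζ : ζ₁ ≠ ζ₂)
    (ψ₁ ψ₂ : ℝ → ℂ × ℂ)
    (h₁ : IsWave I u₁ u₂ ζ₁ ψ₁) (h₂ : IsWave I u₁ u₂ ζ₂ ψ₂)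
    (hW : ∀ x ∈ I, Wr ψ₂ ψ₁ x ≠ 0)
    (v₁ v₂ : ℝ → ℂ)
    (hv₁ : ∀ x, v₁ x = u₁ x + 2 * Complex.I * (ζ₂ - ζ₁) * (ψ₁ x).1 * (ψ₂ x).1 / Wr ψ₂ ψ₁ x)
    (hv₂ : ∀ x, v₂ x = u₂ x - 2 * Complex.I * (ζ₂ - ζ₁) * (ψ₁ x).2 * (ψ₂ x).2 / Wr ψ₂ ψ₁ x)
    (z : ℂ) (φ : ℝ → ℂ × ℂ) (hφ : IsWave I u₁ u₂ z φ) :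
    IsWave I v₁ v₂ z
      (fun x => (z - ζ₂) • φ x + ((ζ₂ - ζ₁) * Wr ψ₂ φ x / Wr ψ₂ ψ₁ x) • ψ₁ x) :=
  statement2_general h₁ h₂ hW (fun x _ => hv₁ x) (fun x _ => hv₂ x) hφ
end
end

section
/- Let I ⊆ ℝ be an open interval, u : I → ℂ, ζ ∈ ℂ, and let φ = (φ₁,φ₂) : I → ℂ² be a nowhere-vanishing differentiable function satisfying φ₁' = −iζφ₁ + uφ₂ and φ₂' = iζφ₂ − conj(u)φ₁. Define the Bäcklund transform v = u + 4(Im ζ)·φ₁·conj(φ₂)/(|φ₁|² + |φ₂|²). Then the function χ = φ/(|φ₁|² + |φ₂|²) satisfies χ₁' = −i·conj(ζ)·χ₁ + vχ₂ and χ₂' = i·conj(ζ)·χ₂ − conj(v)χ₁ on I; that is, χ is a conj(ζ)-eigenfunction of the Lax operator associated to v. -/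
noncomputable section

/-!
Along a `ζ`-wave, `(|φ₁|² + |φ₂|²)' = 2 (Im ζ) (|φ₁|² - |φ₂|²)`. Dividing `φ₁` by
`N = |φ₁|² + |φ₂|²` therefore adds `-2 (Im ζ) (|φ₁|² - |φ₂|²) / N` to its logarithmic derivative,
while replacing `ζ` by `conj ζ` in `-iζ` adds `-2 (Im ζ)`. The discrepancy `4 (Im ζ) |φ₂|² / N`
is exactly what the change of potential `v - u` contributes. Exchanging the components turns
`ζ`-waves for `u` into `-ζ`-waves for `-conj u`, so the second equation is an instance of the first.
-/

open scoped ComplexConjugate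

/-- The squared Hermitian norm `|z₁|² + |z₂|²` on `ℂ²`, used to normalize waves. It is spelled out
because the norm of `ℂ × ℂ` in Mathlib is the sup norm. -/
def density (z : ℂ × ℂ) : ℝ :=
  Complex.normSq z.1 + Complex.normSq z.2

/-- The Zakharov–Shabat system with potential `u` and spectral parameter `ζ` holds for `φ` at the
single point `x`. A `ζ`-wave on an open interval is a function satisfying this at each of its
points. -/
def IsWaveAt (u : ℝ → ℂ) (ζ : ℂ) (φ : ℝ → ℂ × ℂ) (x : ℝ) : Prop :=
  HasDerivAt (fun y ↦ (φ y).1) (-Complex.I * ζ * (φ x).1 + u x * (φ x).2) x ∧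
    HasDerivAt (fun y ↦ (φ y).2) (Complex.I * ζ * (φ x).2 - conj (u x) * (φ x).1) x

/-- The Bäcklund transform of the potential `u` along a `ζ`-wave `φ`. At zeros of `φ` the division
convention makes it equal to `u`. -/
def backlundPotential (u : ℝ → ℂ) (ζ : ℂ) (φ : ℝ → ℂ × ℂ) (x : ℝ) : ℂ :=
  u x + 4 * (ζ.im : ℂ) * (φ x).1 * conj (φ x).2 / (density (φ x) : ℂ)

/-- The function `φ / (|φ₁|² + |φ₂|²)`, the candidate wave for the transformed potential. -/
def dualWave (φ : ℝ → ℂ × ℂ) (x : ℝ) : ℂ × ℂ :=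
  (density (φ x) : ℂ)⁻¹ • φ x

theorem density_eq_zero {z : ℂ × ℂ} : density z = 0 ↔ z = 0 := by
  simp only [density, add_eq_zero_iff_of_nonneg (Complex.normSq_nonneg _)
    (Complex.normSq_nonneg _), Complex.normSq_eq_zero, Prod.ext_iff, Prod.fst_zero, Prod.snd_zero]

theorem density_swap (z : ℂ × ℂ) : density z.swap = density z :=
  add_comm _ _

theorem dualWave_swap (φ : ℝ → ℂ × ℂ) (x : ℝ) :
    dualWave (fun y ↦ (φ y).swap) x = (dualWave φ x).swap := by
  simp only [dualWave, density_swap, Prod.smul_swap]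

theorem backlundPotential_swap (u : ℝ → ℂ) (ζ : ℂ) (φ : ℝ → ℂ × ℂ) (x : ℝ) :
    backlundPotential (fun y ↦ -conj (u y)) (-ζ) (fun y ↦ (φ y).swap) x =
      -conj (backlundPotential u ζ φ x) := by
  simp only [backlundPotential, density_swap, Prod.fst_swap, Prod.snd_swap, Complex.neg_im,
    Complex.ofReal_neg, map_add, map_mul, map_div₀, map_ofNat, Complex.conj_ofReal,
    Complex.conj_conj]
  ring

theorem hasDerivAt_normSq_comp {f : ℝ → ℂ} {f' : ℂ} {x : ℝ} (hf : HasDerivAt f f' x) :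
    HasDerivAt (fun y ↦ Complex.normSq (f y)) (2 * (conj (f x) * f').re) x := by
  simpa only [Complex.normSq_eq_norm_sq, Complex.inner, mul_comm f'] using hf.norm_sq

namespace IsWaveAt

variable {u : ℝ → ℂ} {ζ : ℂ} {φ : ℝ → ℂ × ℂ} {x : ℝ}

theorem swap (h : IsWaveAt u ζ φ x) :
    IsWaveAt (fun y ↦ -conj (u y)) (-ζ) (fun y ↦ (φ y).swap) x := by
  refine ⟨h.2.congr_deriv ?_, h.1.congr_deriv ?_⟩
  · simp only [Prod.fst_swap, Prod.snd_swap]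
    ring
  · simp only [Prod.fst_swap, Prod.snd_swap, map_neg, Complex.conj_conj]
    ring

theorem hasDerivAt_density (h : IsWaveAt u ζ φ x) :
    HasDerivAt (fun y ↦ density (φ y))
      (2 * ζ.im * (Complex.normSq (φ x).1 - Complex.normSq (φ x).2)) x := by
  refine ((hasDerivAt_normSq_comp h.1).add (hasDerivAt_normSq_comp h.2)).congr_deriv ?_
  simp only [neg_mul, Complex.mul_re, Complex.mul_im, Complex.add_re, Complex.add_im,
    Complex.sub_re, Complex.sub_im, Complex.neg_re, Complex.neg_im, Complex.conj_re,
    Complex.conj_im, Complex.I_re, Complex.I_im, Complex.normSq_apply]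
  ring

theorem hasDerivAt_dualWave_fst (h : IsWaveAt u ζ φ x) (hφ : φ x ≠ 0) :
    HasDerivAt (fun y ↦ (dualWave φ y).1)
      (-Complex.I * conj ζ * (dualWave φ x).1 + backlundPotential u ζ φ x * (dualWave φ x).2)
      x := by
  have density_ne : (density (φ x) : ℂ) ≠ 0 :=
    Complex.ofReal_ne_zero.mpr (density_eq_zero.not.mpr hφ)
  have balance : (density (φ x) : ℂ) - (Complex.normSq (φ x).1 - Complex.normSq (φ x).2) =
      2 * ((φ x).2 * conj (φ x).2) := by
    rw [density, Complex.ofReal_add, Complex.mul_conj]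
    ring
  have hζ : -Complex.I * ζ = -Complex.I * conj ζ + 2 * ζ.im := by
    have hsub : ζ - conj ζ = 2 * ζ.im * Complex.I := by
      rw [Complex.sub_conj, Complex.ofReal_mul, Complex.ofReal_ofNat]
    linear_combination (-Complex.I) * hsub - 2 * ζ.im * Complex.I_mul_I
  refine ((h.hasDerivAt_density.ofReal_comp.fun_inv density_ne).fun_mul h.1).congr_deriv ?_
  simp only [backlundPotential, dualWave, Prod.smul_fst, Prod.smul_snd, smul_eq_mul]
  push_cast
  rw [hζ]
  field_simp
  linear_combination 2 * ζ.im * (φ x).1 * balance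

end IsWaveAt

theorem statement5_general {u : ℝ → ℂ} {ζ : ℂ} {φ : ℝ → ℂ × ℂ} {x : ℝ}
    (h : IsWaveAt u ζ φ x) (hφ : φ x ≠ 0) :
    IsWaveAt (backlundPotential u ζ φ) (conj ζ) (dualWave φ) x := by
  refine ⟨h.hasDerivAt_dualWave_fst hφ, ?_⟩
  have hswap := h.swap.hasDerivAt_dualWave_fst (Prod.swap_injective.ne hφ)
  simp only [dualWave_swap, backlundPotential_swap, Prod.fst_swap, Prod.snd_swap] at hswap
  refine hswap.congr_deriv ?_
  rw [map_neg]
  ring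

/-- NLS Bäcklund transform. If `φ` is a nowhere-vanishing `ζ`-wave for the
potential `u` on the open interval `I` and `v = u + 4(Im ζ)·φ₁·conj(φ₂)/(|φ₁|² + |φ₂|²)`,
then `χ = φ/(|φ₁|² + |φ₂|²)` solves the Zakharov–Shabat system for `v` with spectral
parameter `conj ζ`; i.e. `χ` is a `conj ζ`-eigenfunction of the Lax operator of `v`. -/
theorem statement5 (a b : ℝ) (I : Set ℝ) (hI : I = Set.Ioo a b)
    (u : ℝ → ℂ) (ζ : ℂ) (φ : ℝ → ℂ × ℂ)
    (hφ0 : ∀ x ∈ I, φ x ≠ 0)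
    (hφ : ∀ x ∈ I,
      HasDerivAt (fun y => (φ y).1) (-Complex.I * ζ * (φ x).1 + u x * (φ x).2) x ∧
      HasDerivAt (fun y => (φ y).2)
        (Complex.I * ζ * (φ x).2 - (starRingEnd ℂ) (u x) * (φ x).1) x)
    (v : ℝ → ℂ)
    (hv : ∀ x, v x = u x + 4 * (ζ.im : ℂ) * (φ x).1 * (starRingEnd ℂ) (φ x).2 /
        ((Complex.normSq (φ x).1 + Complex.normSq (φ x).2 : ℝ) : ℂ))
    (χ : ℝ → ℂ × ℂ)
    (hχ : ∀ x, χ x = (((Complex.normSq (φ x).1 + Complex.normSq (φ x).2 : ℝ) : ℂ))⁻¹ • φ x) :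
    ∀ x ∈ I,
      HasDerivAt (fun y => (χ y).1)
        (-Complex.I * (starRingEnd ℂ) ζ * (χ x).1 + v x * (χ x).2) x ∧
      HasDerivAt (fun y => (χ y).2)
        (Complex.I * (starRingEnd ℂ) ζ * (χ x).2 - (starRingEnd ℂ) (v x) * (χ x).1) x := by
  obtain rfl : v = backlundPotential u ζ φ := funext hv
  obtain rfl : χ = dualWave φ := funext hχ
  exact fun x hx ↦ statement5_general (hφ x hx) (hφ0 x hx)
end
end

section
/- Let N ≥ 1, let z₁,…,z_N be pairwise distinct complex numbers with Im z_j > 0 for all j, and let ψ₁,…,ψ_N ∈ ℂ² be nonzero vectors. Then the N×N matrix M with entries M_{jk} = i·(ψ_k*ψ_j)/(z_j − conj(z_k)) is Hermitian and positive definite. -/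
noncomputable section

/-- Hermitian inner product on `ℂ²` (viewed as `Fin 2 → ℂ`): `φ*ψ = Σ_a conj(φ^a)·ψ^a`. -/
def herm (φ ψ : Fin 2 → ℂ) : ℂ := ∑ a, (starRingEnd ℂ) (φ a) * ψ a

/-- The matrix `M` with entries `M_{jk} = i·(ψ_k*ψ_j)/(z_j − conj(z_k))`. -/
def gramM (N : ℕ) (z : Fin N → ℂ) (ψ : Fin N → Fin 2 → ℂ) : Matrix (Fin N) (Fin N) ℂ :=
  Matrix.of fun j k => Complex.I * herm (ψ k) (ψ j) / (z j - (starRingEnd ℂ) (z k))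

open scoped ComplexOrder

/-! The matrix is the transposed Gram matrix of the modes `t ↦ exp(i z_j t) ψ_j` in the `L²` space
of the half-line `t ≥ 0`, because `∫₀^∞ exp(i(z - conj w)t) dt = i / (z - conj w)` when
`Im z + Im w > 0`. So positive definiteness amounts to linear independence of the modes in `L²`,
where equality almost everywhere of continuous functions is equality everywhere. A linear functional
that does not vanish on a given `ψ_j` reduces this to scalar exponentials, which are pairwise
distinct characters of the additive monoid of nonnegative reals. -/

open Complex MeasureTheory Matrix Set
open scoped NNReal ENNReal ComplexConjugate

section Gram

variable {𝕜 E ι : Type*} [RCLike 𝕜] [NormedAddCommGroup E] [InnerProductSpace 𝕜 E]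

theorem sum_star_mul_gram_mul_eq_inner (v : ι → E) (x : ι →₀ 𝕜) :
    (x.sum fun i xi ↦ x.sum fun j xj ↦ star xi * gram 𝕜 v i j * xj) =
      inner 𝕜 (Finsupp.linearCombination 𝕜 v x) (Finsupp.linearCombination 𝕜 v x) := by
  rw [Finsupp.linearCombination_apply, Finsupp.sum_inner]
  refine Finsupp.sum_congr fun i _ ↦ ?_
  rw [Finsupp.inner_sum]
  refine Finsupp.sum_congr fun j _ ↦ ?_
  rw [inner_smul_left, inner_smul_right, gram_apply, RCLike.star_def]
  ring

/- `Matrix.posDef_gram_of_linearIndependent` is restricted to finite index types. -/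
theorem posDef_gram_of_linearIndependent' {v : ι → E} (hv : LinearIndependent 𝕜 v) :
    (gram 𝕜 v).PosDef := by
  refine ⟨isHermitian_gram 𝕜 v, fun x hx ↦ ?_⟩
  have hsum : Finsupp.linearCombination 𝕜 v x ≠ 0 := fun h ↦ hx (linearIndependent_iff.mp hv x h)
  rw [sum_star_mul_gram_mul_eq_inner, inner_self_eq_norm_sq_to_K]
  exact_mod_cast pow_pos (norm_pos_iff.mpr hsum) 2

end Gram

theorem linearIndependent_fun_smul_const {𝕜 E ι X : Type*} [Field 𝕜] [AddCommGroup E] [Module 𝕜 E]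
    {f : ι → X → 𝕜} (hf : LinearIndependent 𝕜 f) {v : ι → E} (hv : ∀ i, v i ≠ 0) :
    LinearIndependent 𝕜 fun i x ↦ f i x • v i := by
  refine linearIndependent_iff'.mpr fun s c hc j hj ↦ ?_
  obtain ⟨φ, hφ⟩ : ∃ φ : Module.Dual 𝕜 E, φ (v j) ≠ 0 := by
    simpa using (Module.forall_dual_apply_eq_zero_iff 𝕜 (v j)).not.mpr (hv j)
  have hsum : ∑ i ∈ s, (c i * φ (v i)) • f i = 0 := by
    ext x
    have hx := congrArg φ (congrFun hc x)
    simp only [Finset.sum_apply, Pi.smul_apply, map_sum, map_smul, smul_eq_mul, Pi.zero_apply,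
      map_zero] at hx ⊢
    rw [← hx]
    exact Finset.sum_congr rfl fun i _ ↦ by ring
  exact (mul_eq_zero.mp (linearIndependent_iff'.mp hf s _ hsum j hj)).resolve_right hφ

theorem linearIndependent_toLp_of_continuousOn {𝕜 E ι X : Type*} [NormedField 𝕜]
    [NormedAddCommGroup E] [NormedSpace 𝕜 E] [TopologicalSpace X] [MeasurableSpace X]
    {μ : Measure X} [μ.IsOpenPosMeasure] {p : ℝ≥0∞} {s : Set X}
    (hs : s ⊆ closure (interior s)) {f : ι → X → E} (hcont : ∀ i, ContinuousOn (f i) s)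
    (hLp : ∀ i, MemLp (f i) p (μ.restrict s))
    (hf : LinearIndependent 𝕜 fun i ↦ s.domRestrict (f i)) :
    LinearIndependent 𝕜 fun i ↦ (hLp i).toLp (f i) := by
  refine linearIndependent_iff'.mpr fun t c hc ↦ linearIndependent_iff'.mp hf t c ?_
  have hae : (fun x ↦ ∑ i ∈ t, c i • f i x) =ᵐ[μ.restrict s] fun _ ↦ 0 := by
    have hterm : ∀ᵐ x ∂μ.restrict s, ∀ i ∈ t, (c i • (hLp i).toLp (f i)) x = c i • f i x :=
      (Finset.eventually_all t).mpr fun i _ ↦ ((hLp i).const_smul (c i)).coeFn_toLp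
    have hsum := Lp.coeFn_fun_finsetSum t fun i ↦ c i • (hLp i).toLp (f i)
    rw [hc] at hsum
    filter_upwards [hterm, hsum, Lp.coeFn_zero E p (μ.restrict s)] with x hxterm hxsum hxzero
    rw [← Finset.sum_congr rfl hxterm, ← hxsum, hxzero, Pi.zero_apply]
  have heq : EqOn (fun x ↦ ∑ i ∈ t, c i • f i x) (fun _ ↦ 0) s :=
    Measure.eqOn_of_ae_eq hae
      (continuousOn_finsetSum t fun i _ ↦ (hcont i).const_smul (c i)) continuousOn_const hs
  ext x
  simpa only [Finset.sum_apply, Pi.smul_apply, domRestrict_apply, Pi.zero_apply] using heq x.2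

theorem inner_toLp_eq_integral {𝕜 E X : Type*} [RCLike 𝕜] [NormedAddCommGroup E]
    [InnerProductSpace 𝕜 E] [MeasurableSpace X] {μ : Measure X} {f g : X → E}
    (hf : MemLp f 2 μ) (hg : MemLp g 2 μ) :
    inner 𝕜 (hf.toLp f) (hg.toLp g) = ∫ x, inner 𝕜 (f x) (g x) ∂μ := by
  rw [L2.inner_def]
  refine integral_congr_ae ?_
  filter_upwards [hf.coeFn_toLp, hg.coeFn_toLp] with x hfx hgx
  rw [hfx, hgx]

/-- The character `t ↦ exp (a * t)` of the additive monoid of nonnegative reals. The monoid is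
written multiplicatively so that Dedekind's theorem `linearIndependent_monoidHom` applies. -/
def expCharacter (a : ℂ) : Multiplicative ℝ≥0 →* ℂ where
  toFun t := cexp (a * (t.toAdd : ℝ))
  map_one' := by simp
  map_mul' s t := by simp [mul_add, Complex.exp_add]

theorem expCharacter_injective : Function.Injective expCharacter := by
  intro a b hab
  have hderiv (c : ℂ) : HasDerivWithinAt (fun t : ℝ ↦ cexp (c * t)) c (Ici 0) 0 := by
    simpa using ((hasDerivAt_id (0 : ℝ)).ofReal_comp.const_mul c).cexp.hasDerivWithinAt
  have heq : EqOn (fun t : ℝ ↦ cexp (a * t)) (fun t ↦ cexp (b * t)) (Ici 0) := fun t ht ↦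
    DFunLike.congr_fun hab (Multiplicative.ofAdd ⟨t, ht⟩)
  exact (uniqueDiffWithinAt_Ici 0).eq_deriv _ (hderiv a)
    ((hderiv b).congr heq (heq self_mem_Ici))

theorem linearIndependent_domRestrict_cexp_mul :
    LinearIndependent ℂ fun a : ℂ ↦ (Ici 0).domRestrict fun t : ℝ ↦ cexp (a * t) :=
  (linearIndependent_monoidHom (Multiplicative ℝ≥0) ℂ).comp expCharacter expCharacter_injective

section ExpMode

variable {E : Type*} [NormedAddCommGroup E] [NormedSpace ℂ E]

/-- The vector-valued exponential `t ↦ exp (i z t) ψ`. It is defined on all of `ℝ`; for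
`Im z > 0` its restriction to `t ≥ 0` is one of the `L²` functions whose Gram matrix is taken. -/
def expMode (z : ℂ) (ψ : E) (t : ℝ) : E := cexp (I * z * t) • ψ

theorem continuous_expMode (z : ℂ) (ψ : E) : Continuous (expMode z ψ) := by
  unfold expMode
  fun_prop

theorem norm_expMode (z : ℂ) (ψ : E) (t : ℝ) : ‖expMode z ψ t‖ = Real.exp (-z.im * t) * ‖ψ‖ := by
  simp [expMode, norm_smul, norm_exp]

theorem memLp_two_expMode {z : ℂ} (hz : 0 < z.im) (ψ : E) :
    MemLp (expMode z ψ) 2 (volume.restrict (Ici 0)) := by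
  have hsq (t : ℝ) : ‖expMode z ψ t‖ ^ 2 = Real.exp (-(2 * z.im) * t) * ‖ψ‖ ^ 2 := by
    rw [norm_expMode, mul_pow, ← Real.exp_nat_mul]
    push_cast
    ring_nf
  rw [memLp_two_iff_integrable_sq_norm (continuous_expMode z ψ).aestronglyMeasurable]
  simp only [hsq]
  have hexp : IntegrableOn (fun t ↦ Real.exp (-(2 * z.im) * t)) (Ici 0) :=
    (integrableOn_Ici_iff_integrableOn_Ioi).mpr (integrableOn_exp_mul_Ioi (by linarith) 0)
  exact hexp.mul_const _

theorem linearIndependent_domRestrict_expMode {ι : Type*} {z : ι → ℂ} (hz : Function.Injective z)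
    {ψ : ι → E} (hψ : ∀ j, ψ j ≠ 0) :
    LinearIndependent ℂ fun j ↦ (Ici 0).domRestrict (expMode (z j) (ψ j)) :=
  linearIndependent_fun_smul_const (linearIndependent_domRestrict_cexp_mul.comp (fun j ↦ I * z j)
    ((mul_right_injective₀ I_ne_zero).comp hz)) hψ

end ExpMode

section ExpModeInner

variable {E : Type*} [NormedAddCommGroup E] [InnerProductSpace ℂ E]

theorem inner_expMode (z w : ℂ) (ψ φ : E) (t : ℝ) :
    inner ℂ (expMode w φ t) (expMode z ψ t) = inner ℂ φ ψ * cexp (I * (z - conj w) * t) := by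
  have hexp : cexp (I * (z - conj w) * t) = conj (cexp (I * w * t)) * cexp (I * z * t) := by
    rw [← exp_conj, ← Complex.exp_add]
    simp only [map_mul, conj_I, conj_ofReal]
    ring_nf
  rw [expMode, expMode, inner_smul_left, inner_smul_right, hexp]
  ring

theorem integral_inner_expMode {z w : ℂ} (h : 0 < z.im + w.im) (ψ φ : E) :
    ∫ t in Ici (0 : ℝ), inner ℂ (expMode w φ t) (expMode z ψ t) =
      I * inner ℂ φ ψ / (z - conj w) := by
  have hre : (I * (z - conj w)).re < 0 := by simpa using by linarith
  have hne : z - conj w ≠ 0 := fun h0 ↦ by simp [h0] at hre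
  simp only [inner_expMode]
  rw [integral_const_mul, integral_Ici_eq_integral_Ioi, integral_exp_mul_complex_Ioi hre,
    ofReal_zero, mul_zero, Complex.exp_zero]
  field_simp
  rw [I_sq, mul_neg_one]

theorem statement7_general {ι : Type*} {z : ι → ℂ} (hz : ∀ j, 0 < (z j).im)
    (hdist : Function.Injective z) {ψ : ι → E} (hψ : ∀ j, ψ j ≠ 0) :
    (of fun j k ↦ I * inner ℂ (ψ k) (ψ j) / (z j - conj (z k))).PosDef := by
  have hLp (j : ι) : MemLp (expMode (z j) (ψ j)) 2 (volume.restrict (Ici 0)) :=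
    memLp_two_expMode (hz j) (ψ j)
  have hindep : LinearIndependent ℂ fun j ↦ (hLp j).toLp (expMode (z j) (ψ j)) :=
    linearIndependent_toLp_of_continuousOn (by simp)
      (fun j ↦ (continuous_expMode (z j) (ψ j)).continuousOn) hLp
      (linearIndependent_domRestrict_expMode hdist hψ)
  have hgram : (of fun j k ↦ I * inner ℂ (ψ k) (ψ j) / (z j - conj (z k))) =
      (gram ℂ fun j ↦ (hLp j).toLp (expMode (z j) (ψ j)))ᵀ := by
    ext j k
    rw [of_apply, transpose_apply, gram_apply, inner_toLp_eq_integral,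
      integral_inner_expMode (add_pos (hz j) (hz k))]
  rw [hgram]
  exact (posDef_gram_of_linearIndependent' hindep).transpose

end ExpModeInner

theorem herm_eq_inner_toLp (φ ψ : Fin 2 → ℂ) :
    herm φ ψ = inner ℂ (WithLp.toLp 2 φ) (WithLp.toLp 2 ψ) := by
  simp only [herm, EuclideanSpace.inner_toLp_toLp, dotProduct, Pi.star_apply, RCLike.star_def,
    mul_comm]

/-- for pairwise distinct `z₁,…,z_N` in the upper half-plane and nonzero
vectors `ψ₁,…,ψ_N ∈ ℂ²`, the matrix `M_{jk} = i·(ψ_k*ψ_j)/(z_j − conj(z_k))`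
is Hermitian and positive definite. -/
theorem statement7 (N : ℕ) (hN : 1 ≤ N) (z : Fin N → ℂ)
    (hz : ∀ j, 0 < (z j).im) (hdist : Function.Injective z)
    (ψ : Fin N → Fin 2 → ℂ) (hψ : ∀ j, ψ j ≠ 0) :
    (gramM N z ψ).IsHermitian ∧ (gramM N z ψ).PosDef := by
  have hM : (gramM N z ψ).PosDef := by
    simpa only [gramM, herm_eq_inner_toLp] using
      statement7_general hz hdist fun j ↦ (WithLp.toLp_eq_zero 2).not.mpr (hψ j)
  exact ⟨hM.isHermitian, hM⟩
end
end

section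
/- Let N ≥ 1, let z₁,…,z_N be pairwise distinct complex numbers with Im z_j > 0, and let ψ₁,…,ψ_N ∈ ℂ² be nonzero vectors, so that the matrix M with entries M_{jk} = i·(ψ_k*ψ j)/(z_j − conj(z_k)) is invertible; write m = M⁻¹. Then the 2×2 matrix A = Σ_{j,k=1}^N m_{kj}·ψ_j·ψ_k* (where ψ_j·ψ_k* is the outer product with entries ψ_j^a·conj(ψ_k^b)) satisfies Tr A = 2·Σ_{j=1}^N Im z_j. -/
noncomputable section

/-!
With `D = diag(z)` and `Ψ` the matrix whose rows are the `ψ_j`, the Gram matrix satisfies the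
Sylvester equation `D M - M D* = i Ψ Ψ*`. Multiplying by `M⁻¹` and taking traces gives
`i Tr A = Tr D - Tr D*`. The same equation makes `ker M` a `D*`-stable subspace of `ker Ψ*`, so
`M` is invertible as soon as `ker Ψ*` contains no eigenvector of `D*`.
-/

open Matrix
open scoped ComplexConjugate

theorem exists_hasEigenvector_mem_of_mem_invtSubmodule {K V : Type*} [Field K] [IsAlgClosed K]
    [AddCommGroup V] [Module K V] {f : Module.End K V} {p : Submodule K V}
    [FiniteDimensional K p] (hp : p ≠ ⊥) (hfp : p ∈ f.invtSubmodule) :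
    ∃ μ, ∃ v ∈ p, f.HasEigenvector μ v := by
  have : Nontrivial p := Submodule.nontrivial_iff_ne_bot.mpr hp
  obtain ⟨μ, hμ⟩ := Module.End.exists_eigenvalue (f.restrict hfp)
  obtain ⟨v, hv⟩ := hμ.exists_hasEigenvector
  exact ⟨μ, v, v.2, Module.End.mem_eigenspace_iff.mpr (congrArg Subtype.val hv.apply_eq_smul),
    fun h => hv.2 (Subtype.ext h)⟩

theorem linearIndepOn_fiber_of_injective {K V ι α : Type*} [DivisionRing K] [AddCommGroup V]
    [Module K V] {z : ι → α} {ψ : ι → V} (hz : Function.Injective z) (hψ : ∀ j, ψ j ≠ 0) (w : α) :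
    LinearIndepOn K ψ {j | z j = w} := by
  have hsub : {j | z j = w}.Subsingleton := fun j hj k hk => hz (hj.trans hk.symm)
  obtain h | ⟨j, h⟩ := hsub.eq_empty_or_singleton <;> rw [h]
  · exact linearIndepOn_empty K ψ
  · exact .singleton (hψ j)

theorem ne_conj_of_im_pos {z w : ℂ} (hz : 0 < z.im) (hw : 0 < w.im) : z ≠ conj w := fun h =>
  (hz.trans_eq (congrArg Complex.im h)).not_gt (by simpa using hw)

theorem trace_sum_mul_outer {n m R : Type*} [Fintype n] [Fintype m] [CommSemiring R]
    [StarRing R] (X : Matrix n n R) (ψ : n → m → R) :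
    (of fun a b => ∑ j, ∑ k, X k j * ψ j a * conj (ψ k b)).trace =
      (X * (of ψ * (of ψ)ᴴ)).trace := calc
  _ = ∑ a, ∑ j, ∑ k, X k j * ψ j a * conj (ψ k a) := rfl
  _ = ∑ k, ∑ j, ∑ a, X k j * ψ j a * conj (ψ k a) := by
    rw [Finset.sum_comm, Finset.sum_comm_cycle]
  _ = ∑ k, ∑ j, X k j * ∑ a, ψ j a * conj (ψ k a) := by simp only [Finset.mul_sum, mul_assoc]
  _ = (X * (of ψ * (of ψ)ᴴ)).trace := rfl

section Sylvester

variable {n m K : Type*} [Fintype n]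

theorem trace_inv_mul_sylvester {R : Type*} [CommRing R] [DecidableEq n] {M : Matrix n n R}
    (hM : IsUnit M.det) (D E : Matrix n n R) :
    (M⁻¹ * (D * M - M * E)).trace = D.trace - E.trace := by
  rw [mul_sub, trace_sub, trace_mul_comm, mul_nonsing_inv_cancel_right M D hM,
    nonsing_inv_mul_cancel_left M E hM]

variable [Field K] [StarRing K]

theorem eq_zero_of_diagonal_star_mulVec_eq_smul [DecidableEq n] {z : n → K} {ψ : n → m → K}
    (hψ : ∀ w, LinearIndepOn K ψ {j | z j = w}) {μ : K} {v : n → K}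
    (hv : diagonal (star z) *ᵥ v = μ • v) (hΨ : (of ψ)ᴴ *ᵥ v = 0) : v = 0 := by
  classical
  have hsupp : ∀ j, v j ≠ 0 → z j = star μ := fun j hj => by
    have hj_eq : star (z j) * v j = μ * v j := by simpa [mulVec_diagonal] using congrFun hv j
    rw [← mul_right_cancel₀ hj hj_eq, star_star]
  have hsum : ∑ j with v j ≠ 0, star (v j) • ψ j = 0 := by
    have hne : ∀ j ∈ Finset.univ, star (v j) • ψ j ≠ 0 → v j ≠ 0 := fun j _ hj hvj =>
      hj (by rw [hvj, star_zero, zero_smul])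
    rw [Finset.sum_filter_of_ne hne]
    have hvecMul : star v ᵥ* of ψ = 0 := by
      rw [← conjTranspose_conjTranspose (of ψ), ← star_mulVec, hΨ, star_zero]
    exact (vecMul_eq_sum _ _).symm.trans hvecMul
  have hindep := linearIndepOn_iff'.mp (hψ (star μ)) _ _
    (fun j hj => hsupp j (by simpa using hj)) hsum
  funext j
  by_contra hj
  exact hj (star_eq_zero.mp (hindep j (by simpa using hj)))

variable [Fintype m] [PartialOrder K] [StarOrderedRing K]
  {M D E : Matrix n n K} {Ψ : Matrix n m K} {c : K} {v : n → K}

theorem conjTranspose_mulVec_eq_zero_of_sylvester (hM : M.IsHermitian)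
    (hS : D * M - M * E = c • (Ψ * Ψᴴ)) (hc : c ≠ 0) (hv : M *ᵥ v = 0) : Ψᴴ *ᵥ v = 0 := by
  have hv_star : star v ᵥ* M = 0 := by
    rw [← star_star (star v ᵥ* M), star_vecMul, star_star, hM.eq, hv, star_zero]
  have hquad : c * (star (Ψᴴ *ᵥ v) ⬝ᵥ (Ψᴴ *ᵥ v)) = 0 := calc
    c * (star (Ψᴴ *ᵥ v) ⬝ᵥ (Ψᴴ *ᵥ v)) = star v ⬝ᵥ ((c • (Ψ * Ψᴴ)) *ᵥ v) := by
      rw [star_mulVec, conjTranspose_conjTranspose, ← dotProduct_mulVec, mulVec_mulVec,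
        smul_mulVec, dotProduct_smul, smul_eq_mul]
    _ = star v ⬝ᵥ (D *ᵥ (M *ᵥ v)) - (star v ᵥ* M) ⬝ᵥ (E *ᵥ v) := by
      rw [← hS, sub_mulVec, dotProduct_sub, ← mulVec_mulVec, ← mulVec_mulVec,
        dotProduct_mulVec (star v) M]
    _ = 0 := by rw [hv, hv_star, mulVec_zero, dotProduct_zero, zero_dotProduct, sub_zero]
  exact dotProduct_star_self_eq_zero.mp ((mul_eq_zero.mp hquad).resolve_left hc)

theorem mulVec_mulVec_eq_zero_of_sylvester (hM : M.IsHermitian)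
    (hS : D * M - M * E = c • (Ψ * Ψᴴ)) (hc : c ≠ 0) (hv : M *ᵥ v = 0) : M *ᵥ (E *ᵥ v) = 0 := by
  have hΨ := conjTranspose_mulVec_eq_zero_of_sylvester hM hS hc hv
  rw [mulVec_mulVec, ← sub_sub_cancel (D * M) (M * E), hS, sub_mulVec, smul_mulVec,
    ← mulVec_mulVec, ← mulVec_mulVec, hv, hΨ, mulVec_zero, mulVec_zero, smul_zero, sub_zero]

/-- The hypothesis `hobs` is the Hautus test for observability of the pair `(Ψᴴ, E)`. -/
theorem isUnit_det_of_sylvester [IsAlgClosed K] [DecidableEq n] (hM : M.IsHermitian)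
    (hS : D * M - M * E = c • (Ψ * Ψᴴ)) (hc : c ≠ 0)
    (hobs : ∀ (μ : K) (v : n → K), E *ᵥ v = μ • v → Ψᴴ *ᵥ v = 0 → v = 0) : IsUnit M.det := by
  suffices hker : LinearMap.ker M.mulVecLin = ⊥ by
    rwa [← isUnit_iff_isUnit_det, ← mulVec_injective_iff_isUnit, ← coe_mulVecLin,
      ← LinearMap.ker_eq_bot]
  by_contra hker
  obtain ⟨μ, v, hMv, hv⟩ := exists_hasEigenvector_mem_of_mem_invtSubmodule (f := E.mulVecLin) hker
    fun v hv => mulVec_mulVec_eq_zero_of_sylvester hM hS hc hv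
  exact hv.2 (hobs μ v hv.apply_eq_smul (conjTranspose_mulVec_eq_zero_of_sylvester hM hS hc hMv))

end Sylvester

section SolitonGram

variable {n m : Type*} [Fintype m]

/-- The Gram matrix `M_{jk} = i·(ψ_k*ψ_j)/(z_j − conj(z_k))` of a soliton addition, for an
arbitrary finite family of vectors in `ℂᵐ`; `gramM` is the case of `N` vectors in `ℂ²`. The entry
is the junk value `0` where `z_j = conj(z_k)`. -/
def solitonGram (z : n → ℂ) (ψ : n → m → ℂ) : Matrix n n ℂ :=
  of fun j k => Complex.I * (star (ψ k) ⬝ᵥ ψ j) / (z j - conj (z k))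

theorem gramM_eq_solitonGram (N : ℕ) (z : Fin N → ℂ) (ψ : Fin N → Fin 2 → ℂ) :
    gramM N z ψ = solitonGram z ψ := rfl

theorem isHermitian_solitonGram (z : n → ℂ) (ψ : n → m → ℂ) : (solitonGram z ψ).IsHermitian := by
  ext j k
  have hinner : star (star (ψ j) ⬝ᵥ ψ k) = star (ψ k) ⬝ᵥ ψ j := by
    rw [star_dotProduct, star_star, dotProduct_comm]
  have hdenom : star (z k - conj (z j)) = -(z j - conj (z k)) := by simp
  rw [conjTranspose_apply, solitonGram, of_apply, of_apply, star_div₀, star_mul', hinner, hdenom,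
    Complex.star_def, Complex.conj_I, neg_mul, neg_div_neg_eq]

variable [Fintype n] [DecidableEq n] {z : n → ℂ} {ψ : n → m → ℂ}

theorem sylvester_solitonGram (hz : ∀ j k, z j ≠ conj (z k)) (ψ : n → m → ℂ) :
    diagonal z * solitonGram z ψ - solitonGram z ψ * diagonal (star z) =
      Complex.I • (of ψ * (of ψ)ᴴ) := by
  ext j k
  have hjk : z j - conj (z k) ≠ 0 := sub_ne_zero.mpr (hz j k)
  have hinner : (of ψ * (of ψ)ᴴ) j k = star (ψ k) ⬝ᵥ ψ j := dotProduct_comm _ _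
  rw [Matrix.sub_apply, diagonal_mul, mul_diagonal, Matrix.smul_apply, hinner, smul_eq_mul,
    solitonGram, of_apply, Pi.star_apply, Complex.star_def]
  field_simp

open scoped ComplexOrder in
theorem isUnit_det_solitonGram (hz : ∀ j k, z j ≠ conj (z k))
    (hψ : ∀ w, LinearIndepOn ℂ ψ {j | z j = w}) : IsUnit (solitonGram z ψ).det :=
  isUnit_det_of_sylvester (isHermitian_solitonGram z ψ) (sylvester_solitonGram hz ψ)
    Complex.I_ne_zero fun _ _ => eq_zero_of_diagonal_star_mulVec_eq_smul hψ

theorem statement8_general (hz : ∀ j k, z j ≠ conj (z k))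
    (hψ : ∀ w, LinearIndepOn ℂ ψ {j | z j = w}) :
    (of fun a b => ∑ j, ∑ k, (solitonGram z ψ)⁻¹ k j * ψ j a * conj (ψ k b)).trace =
      ((2 * ∑ j, (z j).im : ℝ) : ℂ) := by
  rw [trace_sum_mul_outer]
  apply mul_left_cancel₀ Complex.I_ne_zero
  calc
    Complex.I * ((solitonGram z ψ)⁻¹ * (of ψ * (of ψ)ᴴ)).trace
    _ = (diagonal z).trace - (diagonal (star z)).trace := by
      rw [← smul_eq_mul, ← trace_smul, ← mul_smul_comm, ← sylvester_solitonGram hz,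
        trace_inv_mul_sylvester (isUnit_det_solitonGram hz hψ)]
    _ = ∑ j, (z j - conj (z j)) := by
      rw [trace_diagonal, trace_diagonal, ← Finset.sum_sub_distrib]; rfl
    _ = Complex.I * ((2 * ∑ j, (z j).im : ℝ) : ℂ) := by
      simp only [Complex.sub_conj, ← Finset.sum_mul, ← Finset.mul_sum, ← Complex.ofReal_sum,
        mul_comm Complex.I]

end SolitonGram

/-- with `m = M⁻¹` the inverse of the Gram matrix
`M_{jk} = i·(ψ_k*ψ_j)/(z_j − conj(z_k))`, the `2×2` matrix
`A = Σ_{j,k} m_{kj}·ψ_j·ψ_k*` (outer products) satisfies `Tr A = 2·Σ_j Im z_j`. -/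
theorem statement8 (N : ℕ) (hN : 1 ≤ N) (z : Fin N → ℂ)
    (hz : ∀ j, 0 < (z j).im) (hdist : Function.Injective z)
    (ψ : Fin N → Fin 2 → ℂ) (hψ : ∀ j, ψ j ≠ 0)
    (A : Matrix (Fin 2) (Fin 2) ℂ)
    (hA : A = Matrix.of fun a b =>
      ∑ j, ∑ k, (gramM N z ψ)⁻¹ k j * ψ j a * (starRingEnd ℂ) (ψ k b)) :
    A.trace = ((2 * ∑ j, (z j).im : ℝ) : ℂ) := by
  rw [hA, gramM_eq_solitonGram]
  exact statement8_general (fun j k => ne_conj_of_im_pos (hz j) (hz k))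
    (linearIndepOn_fiber_of_injective hdist hψ)
end
end

section
/- Let N ≥ 1, let z₁,…,z_N be pairwise distinct complex numbers with Im z_j > 0, and let ψ₁,…,ψ_N ∈ ℂ² be nonzero vectors. Let M be the matrix with entries M_{jk} = i·(ψ_k*ψ_j)/(z_j − conj(z_k)), let m = M⁻¹, and define φ_j = Σ_{k=1}^N m_{jk}·ψ_k ∈ ℂ². Then the inverse matrix satisfies the converse relation m_{jk} = i·(φ_k*φ_j)/(z_k − conj(z_j)) for all 1 ≤ j,k ≤ N. -/
/-!
The matrix `M` solves the displacement equation `diag z * M - M * diag (conj z) = i • Ψ * Ψᴴ`,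
where `ψ_j` is the `j`-th row of `Ψ`. Multiplying by `M⁻¹` on both sides gives
`M⁻¹ * diag z - diag (conj z) * M⁻¹ = i • Φ * Φᴴ` with `Φ = M⁻¹ * Ψ`, because `M` is Hermitian;
read entrywise, this is the converse relation.

If `M v = 0`, pairing the displacement equation with `v` gives `Ψᴴ v = 0`, and then applying the
equation to `v` gives `M (diag (conj z) v) = 0`. So `ker M` is invariant under a diagonal matrix
with distinct entries, hence contains the coordinate components of its elements; as
`ker M ⊆ ker Ψᴴ` and no `ψ_j` vanishes, `ker M = 0`.
-/

noncomputable section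

open Matrix

theorem single_mem_of_mul_mem {ι K : Type*} [Finite ι] [DecidableEq ι] [Field K] {y : ι → K}
    (hy : Function.Injective y) {p : Submodule K (ι → K)} (hp : ∀ v ∈ p, y * v ∈ p)
    {v : ι → K} (hv : v ∈ p) (i : ι) : Pi.single i (v i) ∈ p := by
  cases nonempty_fintype ι
  -- `L` takes the value `1` at `y i` and `0` at the other `y j`, so `L(y)` is `Pi.single i 1`.
  let L := Lagrange.basis Finset.univ y i
  have hL : Polynomial.aeval y L * v = Pi.single i (v i) := by
    ext j
    rcases eq_or_ne j i with rfl | hji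
    · simp [L, Polynomial.coe_aeval_eq_eval, Lagrange.eval_basis_self hy.injOn]
    · simp [L, Polynomial.coe_aeval_eq_eval, hji, Lagrange.eval_basis_of_ne hji.symm]
  rw [← hL, ← smul_eq_mul]
  exact L.aeval_apply_smul_mem_of_le_comap' hv y hp

theorem diagonal_mul_sub_mul_diagonal_eq_iff {ι κ K : Type*} [Fintype ι] [DecidableEq ι]
    [Fintype κ] [DecidableEq κ] [Field K] {x : ι → K} {y : κ → K} (hxy : ∀ j k, x j ≠ y k)
    {M C : Matrix ι κ K} :
    diagonal x * M - M * diagonal y = C ↔ ∀ j k, M j k = C j k / (x j - y k) := by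
  simp only [← Matrix.ext_iff, Matrix.sub_apply, diagonal_mul, mul_diagonal]
  refine forall₂_congr fun j k ↦ ?_
  rw [eq_div_iff (sub_ne_zero.mpr (hxy j k)), mul_sub, mul_comm (x j)]

theorem inv_mul_sub_mul_inv_of_mul_sub_mul {ι R : Type*} [Fintype ι] [DecidableEq ι] [CommRing R]
    {A B C M : Matrix ι ι R} (hM : IsUnit M) (h : A * M - M * B = C) :
    M⁻¹ * A - B * M⁻¹ = M⁻¹ * C * M⁻¹ := by
  have hdet : IsUnit M.det := (isUnit_iff_isUnit_det M).mp hM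
  rw [← h, mul_sub, sub_mul, ← Matrix.mul_assoc, ← Matrix.mul_assoc, nonsing_inv_mul M hdet,
    Matrix.one_mul, mul_nonsing_inv_cancel_right M _ hdet]

theorem inv_mul_sub_mul_inv_of_isHermitian {ι n R : Type*} [Fintype ι] [DecidableEq ι] [Fintype n]
    [CommRing R] [StarRing R] {A A' M : Matrix ι ι R} {B : Matrix ι n R} {c : R}
    (hM : IsUnit M) (hMh : M.IsHermitian) (h : A * M - M * A' = c • (B * Bᴴ)) :
    M⁻¹ * A - A' * M⁻¹ = c • (M⁻¹ * B * (M⁻¹ * B)ᴴ) := by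
  rw [inv_mul_sub_mul_inv_of_mul_sub_mul hM h, conjTranspose_mul, hMh.inv.eq]
  simp only [Matrix.mul_smul, Matrix.smul_mul, Matrix.mul_assoc]

section Lyapunov

variable {ι n R : Type*} [Fintype ι] [Fintype n] [CommRing R] [NoZeroDivisors R] [PartialOrder R]
  [StarRing R] [StarOrderedRing R] {A M : Matrix ι ι R} {B : Matrix ι n R} {c : R} {v : ι → R}

theorem conjTranspose_mulVec_eq_zero_of_lyapunov (hMh : M.IsHermitian) (hc : c ≠ 0)
    (h : A * M - M * Aᴴ = c • (B * Bᴴ)) (hv : M *ᵥ v = 0) : Bᴴ *ᵥ v = 0 := by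
  have hv' : star v ᵥ* M = 0 := by
    rw [← hMh.eq, ← star_mulVec, hv, star_zero]
  have hquad : star v ⬝ᵥ (A * M - M * Aᴴ) *ᵥ v = 0 := by
    simp only [sub_mulVec, ← mulVec_mulVec, hv, mulVec_zero, zero_sub, dotProduct_neg,
      dotProduct_mulVec _ M, hv', zero_dotProduct, neg_zero]
  have hnorm : star (Bᴴ *ᵥ v) ⬝ᵥ (Bᴴ *ᵥ v) = star v ⬝ᵥ (B * Bᴴ) *ᵥ v := by
    rw [star_mulVec, conjTranspose_conjTranspose, ← dotProduct_mulVec, mulVec_mulVec]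
  rw [h, smul_mulVec, dotProduct_smul, smul_eq_mul, ← hnorm] at hquad
  exact dotProduct_star_self_eq_zero.mp ((mul_eq_zero.mp hquad).resolve_left hc)

theorem mulVec_conjTranspose_mulVec_eq_zero_of_lyapunov (hMh : M.IsHermitian) (hc : c ≠ 0)
    (h : A * M - M * Aᴴ = c • (B * Bᴴ)) (hv : M *ᵥ v = 0) : M *ᵥ (Aᴴ *ᵥ v) = 0 := by
  have hBv := conjTranspose_mulVec_eq_zero_of_lyapunov hMh hc h hv
  simpa only [sub_mulVec, smul_mulVec, ← mulVec_mulVec, hv, hBv, mulVec_zero, smul_zero, zero_sub,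
    neg_eq_zero] using congrArg (· *ᵥ v) h

end Lyapunov

theorem isUnit_of_diagonal_lyapunov {ι n K : Type*} [Fintype ι] [DecidableEq ι] [Fintype n]
    [Field K] [PartialOrder K] [StarRing K] [StarOrderedRing K] {M : Matrix ι ι K}
    {B : Matrix ι n K} {c : K} {z : ι → K} (hz : Function.Injective z) (hB : ∀ j, B j ≠ 0)
    (hMh : M.IsHermitian) (hc : c ≠ 0)
    (h : diagonal z * M - M * diagonal (star z) = c • (B * Bᴴ)) : IsUnit M := by
  rw [← diagonal_conjTranspose] at h
  have hinv : ∀ v ∈ LinearMap.ker M.mulVecLin, star z * v ∈ LinearMap.ker M.mulVecLin := by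
    intro v hv
    have hdiag : star z * v = (diagonal z)ᴴ *ᵥ v := by
      ext j
      rw [diagonal_conjTranspose, mulVec_diagonal, Pi.mul_apply]
    rw [hdiag]
    exact mulVec_conjTranspose_mulVec_eq_zero_of_lyapunov hMh hc h hv
  rw [← mulVec_injective_iff_isUnit, ← coe_mulVecLin, ← LinearMap.ker_eq_bot,
    ker_mulVecLin_eq_bot_iff]
  intro v hv
  ext i
  have hsingle := single_mem_of_mul_mem (star_injective.comp hz) hinv hv i
  have hBi := conjTranspose_mulVec_eq_zero_of_lyapunov hMh hc h hsingle
  obtain ⟨a, ha⟩ := Function.ne_iff.mp (hB i)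
  have hBia : star (B i a) * v i = 0 := by
    simpa using congrFun hBi a
  exact (mul_eq_zero.mp hBia).resolve_left (star_ne_zero.mpr ha)

section CauchyGram

variable {ι n K : Type*} [Fintype n] [Field K] [StarRing K] {c : K} {z : ι → K}
  {Ψ : Matrix ι n K}

/-- The matrix with entries `c * (ψ_k*ψ_j) / (z_j - star z_k)`, where `ψ_j` is the `j`-th row of
`Ψ`; for `c = i` it is the matrix `M` of the soliton addition map. The entries with
`z_j = star z_k` are `0`. -/
def cauchyGram (c : K) (z : ι → K) (Ψ : Matrix ι n K) : Matrix ι ι K :=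
  of fun j k ↦ c * (Ψ * Ψᴴ) j k / (z j - star (z k))

theorem isHermitian_cauchyGram (hc : star c = -c) : (cauchyGram c z Ψ).IsHermitian := by
  ext j k
  have hΨ : star ((Ψ * Ψᴴ) k j) = (Ψ * Ψᴴ) j k := (isHermitian_mul_conjTranspose_self Ψ).apply j k
  simp only [conjTranspose_apply, cauchyGram, of_apply, star_div₀, star_mul', star_sub, star_star,
    hc, hΨ]
  rw [← neg_sub (z j), neg_mul, neg_div_neg_eq]

variable [Fintype ι] [DecidableEq ι]

theorem diagonal_mul_cauchyGram_sub (hz : ∀ j k, z j ≠ star (z k)) :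
    diagonal z * cauchyGram c z Ψ - cauchyGram c z Ψ * diagonal (star z) = c • (Ψ * Ψᴴ) :=
  (diagonal_mul_sub_mul_diagonal_eq_iff hz).mpr fun _ _ ↦ rfl

theorem isUnit_cauchyGram [PartialOrder K] [StarOrderedRing K] (hc : star c = -c) (hc₀ : c ≠ 0)
    (hz : ∀ j k, z j ≠ star (z k)) (hinj : Function.Injective z) (hΨ : ∀ j, Ψ j ≠ 0) :
    IsUnit (cauchyGram c z Ψ) :=
  isUnit_of_diagonal_lyapunov hinj hΨ (isHermitian_cauchyGram hc) hc₀
    (diagonal_mul_cauchyGram_sub hz)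

theorem statement9_general (hc : star c = -c) (hz : ∀ j k, z j ≠ star (z k))
    (hM : IsUnit (cauchyGram c z Ψ)) {Φ : Matrix ι n K} (hΦ : Φ = (cauchyGram c z Ψ)⁻¹ * Ψ)
    (j k : ι) : (cauchyGram c z Ψ)⁻¹ j k = c * (Φ * Φᴴ) j k / (z k - star (z j)) := by
  have hdisp := inv_mul_sub_mul_inv_of_isHermitian hM (isHermitian_cauchyGram hc)
    (diagonal_mul_cauchyGram_sub hz)
  rw [← hΦ, ← neg_inj, neg_sub] at hdisp
  have hentry := (diagonal_mul_sub_mul_diagonal_eq_iff fun j k ↦ (hz k j).symm).mp hdisp j k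
  rwa [← neg_sub (z k), Matrix.neg_apply, neg_div_neg_eq] at hentry

end CauchyGram

theorem ne_star_of_im_pos {z w : ℂ} (hz : 0 < z.im) (hw : 0 < w.im) : z ≠ star w := by
  intro h
  have him : z.im = -w.im := congrArg Complex.im h
  linarith

theorem mul_conjTranspose_apply_eq_herm {ι : Type*} (ψ : ι → Fin 2 → ℂ) (j k : ι) :
    (of ψ * (of ψ)ᴴ) j k = herm (ψ k) (ψ j) := by
  simp only [mul_apply, conjTranspose_apply, of_apply, herm, starRingEnd_apply, mul_comm]

theorem gramM_eq_cauchyGram (N : ℕ) (z : Fin N → ℂ) (ψ : Fin N → Fin 2 → ℂ) :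
    gramM N z ψ = cauchyGram Complex.I z (of ψ) := by
  ext j k
  simp only [gramM, cauchyGram, of_apply, mul_conjTranspose_apply_eq_herm, starRingEnd_apply]

/-- with `m = M⁻¹` the inverse of the Gram matrix
`M_{jk} = i·(ψ_k*ψ_j)/(z_j − conj(z_k))` and `φ_j = Σ_k m_{jk}·ψ_k`, the inverse
satisfies the converse relation `m_{jk} = i·(φ_k*φ_j)/(z_k − conj(z_j))`. -/
theorem statement9 (N : ℕ) (hN : 1 ≤ N) (z : Fin N → ℂ)
    (hz : ∀ j, 0 < (z j).im) (hdist : Function.Injective z)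
    (ψ : Fin N → Fin 2 → ℂ) (hψ : ∀ j, ψ j ≠ 0)
    (φ : Fin N → Fin 2 → ℂ)
    (hφ : ∀ j, φ j = ∑ k, (gramM N z ψ)⁻¹ j k • ψ k) :
    ∀ j k, (gramM N z ψ)⁻¹ j k
      = Complex.I * herm (φ k) (φ j) / (z k - (starRingEnd ℂ) (z j)) := by
  have hz' (j k : Fin N) : z j ≠ star (z k) := ne_star_of_im_pos (hz j) (hz k)
  have hM : IsUnit (cauchyGram Complex.I z (of ψ)) := by
    open scoped ComplexOrder in
    exact isUnit_cauchyGram Complex.conj_I Complex.I_ne_zero hz' hdist hψ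
  have hΦ : of φ = (cauchyGram Complex.I z (of ψ))⁻¹ * of ψ := by
    ext j a
    simp [hφ, gramM_eq_cauchyGram, mul_apply]
  intro j k
  rw [gramM_eq_cauchyGram, ← mul_conjTranspose_apply_eq_herm, starRingEnd_apply]
  exact statement9_general Complex.conj_I hz' hM hΦ j k
end
end

section
/- For all complex numbers z₁, z₂, γ₁, γ₂ the following identity holds: 4·|z₁ − z₂|²·cosh(2 Re γ₁)·cosh(2 Re γ₂) + 16·(Im z₁)·(Im z₂)·|sinh(γ₁ − γ₂)|² = 2·|z₁ − z₂|²·(|cosh(γ₁ + γ₂)|² + |sinh(γ₁ + γ₂)|² + |cosh(γ₁ − γ₂)|²) + 2·(|z₁ + z₂|² − 4·Re(z₁·z₂))·|sinh(γ₁ − γ₂)|². -/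
/-! Since `e^{±w} = cosh w ± sinh w`, the parallelogram law gives
`|cosh w|² + |sinh w|² = cosh (2 Re w)`. Summing this over `w = γ₁ ± γ₂` turns the product
`2 cosh (2 Re γ₁) cosh (2 Re γ₂)` into squared moduli of functions holomorphic in `(γ₁, γ₂)`. The
coefficient of `|sinh (γ₁ - γ₂)|²` is then matched by
`|z₁ + z₂|² - 4 Re (z₁ z₂) = |z₁ - z₂|² + 8 Im z₁ Im z₂`. -/

section

open Complex

theorem normSq_add_sub_four_mul_re_mul (z w : ℂ) :
    normSq (z + w) - 4 * (z * w).re = normSq (z - w) + 8 * z.im * w.im := by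
  simp only [normSq_apply, add_re, add_im, sub_re, sub_im, mul_re]
  ring

theorem normSq_exp (w : ℂ) : normSq (exp w) = Real.exp (2 * w.re) := by
  rw [normSq_eq_norm_sq, norm_exp, ← Real.exp_nat_mul, Nat.cast_ofNat]

theorem normSq_cosh_add_normSq_sinh (w : ℂ) :
    normSq (cosh w) + normSq (sinh w) = Real.cosh (2 * w.re) := by
  have parallelogram := parallelogram_law_with_norm ℝ (cosh w) (sinh w)
  simp only [cosh_add_sinh, cosh_sub_sinh, Complex.sq_norm, normSq_exp, neg_re, mul_neg]
    at parallelogram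
  rw [Real.cosh_eq, parallelogram]
  ring

theorem two_mul_cosh_two_mul_re_mul_cosh_two_mul_re (z w : ℂ) :
    2 * (Real.cosh (2 * z.re) * Real.cosh (2 * w.re)) =
      normSq (cosh (z + w)) + normSq (sinh (z + w)) +
        (normSq (cosh (z - w)) + normSq (sinh (z - w))) := by
  rw [normSq_cosh_add_normSq_sinh, normSq_cosh_add_normSq_sinh, add_re, sub_re, mul_add, mul_sub,
    Real.cosh_add, Real.cosh_sub]
  ring

end

/-- the two-soliton denominator identity. For all complex `z₁, z₂, γ₁, γ₂`:
`4|z₁ − z₂|²·cosh(2 Re γ₁)·cosh(2 Re γ₂) + 16·Im z₁·Im z₂·|sinh(γ₁ − γ₂)|²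
 = 2|z₁ − z₂|²·(|cosh(γ₁ + γ₂)|² + |sinh(γ₁ + γ₂)|² + |cosh(γ₁ − γ₂)|²)
   + 2·(|z₁ + z₂|² − 4·Re(z₁z₂))·|sinh(γ₁ − γ₂)|²`. -/
theorem statement13 (z₁ z₂ γ₁ γ₂ : ℂ) :
    4 * Complex.normSq (z₁ - z₂) * Real.cosh (2 * γ₁.re) * Real.cosh (2 * γ₂.re) +
      16 * z₁.im * z₂.im * Complex.normSq (Complex.sinh (γ₁ - γ₂))
    = 2 * Complex.normSq (z₁ - z₂) *
        (Complex.normSq (Complex.cosh (γ₁ + γ₂)) + Complex.normSq (Complex.sinh (γ₁ + γ₂)) +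
          Complex.normSq (Complex.cosh (γ₁ - γ₂))) +
      2 * (Complex.normSq (z₁ + z₂) - 4 * (z₁ * z₂).re) *
        Complex.normSq (Complex.sinh (γ₁ - γ₂)) := by
  rw [normSq_add_sub_four_mul_re_mul]
  linear_combination
    2 * Complex.normSq (z₁ - z₂) * two_mul_cosh_two_mul_re_mul_cosh_two_mul_re γ₁ γ₂
end

section
/- Let z₁, z₂ be complex numbers with Im(z₁ + z₂) ≠ 0, and define a₂ = i(z₁ + z₂) − i·Im(z₁² + z₂²)/Im(z₁ + z₂) and a₃ = i(z₁² + z₁z₂ + z₂²) − i·Im(z₁³ + z₂³)/Im(z₁ + z₂). Then Im(z₁ + z₂)·Im(a₂·conj(a₃)) = −2·(Im z₁)·(Im z₂)·|z₁ − conj(z₂)|². In particular, if Im z₁ > 0 and Im z₂ > 0 then a₂ and a₃ are linearly independent over ℝ. -/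
/-!
For a real polynomial `p` put `a(p) = i p[z₁, z₂] − i Im (p(z₁) + p(z₂)) / Im (z₁ + z₂)`, where
`p[z₁, z₂]` is the divided difference. This is `ℝ`-linear in `p` and kills the polynomials of degree
at most one. The area form `Im (a₂ conj a₃)` of `a₂ = a(z²)` and `a₃ = a(z³)` is unchanged when a
real multiple of `a₂` is subtracted from `a₃`, so `z³` may be replaced by
`(z − z₁)(z − conj z₁)(z − Re z₂)`. This cubic vanishes at `z₁` and, up to an affine polynomial, is
`z³ − (2 Re z₁ + Re z₂) z²`; its coefficient carries the factor `Im z₂`.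
-/

open Complex ComplexConjugate

theorem linearIndependent_pair_iff_im_mul_conj_ne_zero (a b : ℂ) :
    LinearIndependent ℝ ![a, b] ↔ (a * conj b).im ≠ 0 := by
  have h_basis : LinearIndependent ℝ ![1, I] := coe_basisOneI ▸ basisOneI.linearIndependent
  have h_coord (z : ℂ) : z = z.re • 1 + z.im • I := by simp [re_add_im]
  have h_area : (a * conj b).im = a.im * b.re - a.re * b.im := by
    simp only [mul_im, conj_re, conj_im]
    ring
  rw [h_coord a, h_coord b, LinearIndependent.pair_add_smul_add_smul_iff, ← h_coord a, ← h_coord b,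
    h_area, sub_ne_zero, ne_comm, and_iff_right h_basis]

theorem im_mul_conj_sub_ofReal_mul_self (a b : ℂ) (c : ℝ) :
    (a * conj (b - c * a)).im = (a * conj b).im := by
  simp only [map_sub, map_mul, conj_ofReal, mul_sub, mul_left_comm a, mul_conj, sub_im,
    im_ofReal_mul, ofReal_im, mul_zero, sub_zero]

theorem im_ofReal_mul_mul_conj_ofReal_mul (s : ℝ) (a b : ℂ) :
    (s * a * conj (s * b)).im = s ^ 2 * (a * conj b).im := by
  rw [map_mul, conj_ofReal, mul_mul_mul_comm, ← ofReal_mul, im_ofReal_mul, sq]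

theorem normSq_sub_conj (z w : ℂ) :
    normSq (z - conj w) = (z - w).re ^ 2 + (z + w).im ^ 2 := by
  simp only [normSq_apply, sub_re, sub_im, add_im, conj_re, conj_im]
  ring

/-- The coefficient of the scattering parameter `β_k` in the relative phase of the two-soliton state
with spectral parameters `z₁`, `z₂`: `k = 2` is the NLS flow and `k = 3` the mKdV flow. The sum is
the divided difference of `z ^ k`, written so that it makes sense also for `z₁ = z₂`. -/
noncomputable def phaseCoeff (z₁ z₂ : ℂ) (k : ℕ) : ℂ :=
  I * ∑ j ∈ Finset.range k, z₁ ^ j * z₂ ^ (k - 1 - j) -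
    I * (((z₁ ^ k + z₂ ^ k).im / (z₁ + z₂).im : ℝ) : ℂ)

section PhaseCoeff

variable (z₁ z₂ : ℂ)

theorem phaseCoeff_two :
    phaseCoeff z₁ z₂ 2 =
      I * (z₁ + z₂) - I * (((z₁ ^ 2 + z₂ ^ 2).im / (z₁ + z₂).im : ℝ) : ℂ) := by
  simp only [phaseCoeff, Finset.sum_range_succ, Finset.sum_range_zero]
  ring

theorem phaseCoeff_three :
    phaseCoeff z₁ z₂ 3 =
      I * (z₁ ^ 2 + z₁ * z₂ + z₂ ^ 2) -
        I * (((z₁ ^ 3 + z₂ ^ 3).im / (z₁ + z₂).im : ℝ) : ℂ) := by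
  simp only [phaseCoeff, Finset.sum_range_succ, Finset.sum_range_zero]
  ring

variable {z₁ z₂}

theorem im_add_mul_phaseCoeff (h : (z₁ + z₂).im ≠ 0) (k : ℕ) :
    (z₁ + z₂).im * phaseCoeff z₁ z₂ k =
      I * ((z₁ + z₂).im * ∑ j ∈ Finset.range k, z₁ ^ j * z₂ ^ (k - 1 - j) -
        (z₁ ^ k + z₂ ^ k).im) := by
  have h_im_ne : ((z₁ + z₂).im : ℂ) ≠ 0 := ofReal_ne_zero.mpr h
  rw [phaseCoeff, ofReal_div, mul_sub, mul_left_comm, mul_left_comm _ I (_ / _),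
    mul_div_cancel₀ _ h_im_ne, ← mul_sub]

theorem im_add_mul_phaseCoeff_two (h : (z₁ + z₂).im ≠ 0) :
    (z₁ + z₂).im * phaseCoeff z₁ z₂ 2 =
      ⟨-(z₁ + z₂).im ^ 2, -((z₁ - z₂).re * (z₁ - z₂).im)⟩ := by
  rw [im_add_mul_phaseCoeff h]
  apply Complex.ext <;>
  · simp only [Finset.sum_range_succ, Finset.sum_range_zero, Nat.reduceSub, pow_succ, pow_zero,
      add_re, add_im, sub_re, sub_im, mul_re, mul_im, I_re, I_im, ofReal_re, ofReal_im, one_re,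
      one_im, zero_re, zero_im]
    ring

theorem im_add_mul_phaseCoeff_three_sub (h : (z₁ + z₂).im ≠ 0) :
    (z₁ + z₂).im *
        (phaseCoeff z₁ z₂ 3 - ((2 * z₁.re + z₂.re : ℝ) : ℂ) * phaseCoeff z₁ z₂ 2) =
      z₂.im * ⟨(z₁ - z₂).re * (z₁ + z₂).im,
        -((z₁ - z₂).re ^ 2 + 2 * z₁.im * (z₁ + z₂).im)⟩ := by
  rw [mul_sub, mul_left_comm, im_add_mul_phaseCoeff h, im_add_mul_phaseCoeff h]
  apply Complex.ext <;>
  · simp only [Finset.sum_range_succ, Finset.sum_range_zero, Nat.reduceSub, pow_succ, pow_zero,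
      add_re, add_im, sub_re, sub_im, mul_re, mul_im, I_re, I_im, ofReal_re, ofReal_im, one_re,
      one_im, zero_re, zero_im]
    ring

theorem im_add_mul_im_phaseCoeff_two_mul_conj_phaseCoeff_three (h : (z₁ + z₂).im ≠ 0) :
    (z₁ + z₂).im * (phaseCoeff z₁ z₂ 2 * conj (phaseCoeff z₁ z₂ 3)).im =
      -2 * z₁.im * z₂.im * normSq (z₁ - conj z₂) := by
  have h_im : (z₁ - z₂).im + (z₁ + z₂).im = 2 * z₁.im := by
    rw [sub_im, add_im]
    ring
  refine mul_left_cancel₀ h ?_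
  rw [← mul_assoc, ← sq, ← im_mul_conj_sub_ofReal_mul_self _ _ (2 * z₁.re + z₂.re),
    ← im_ofReal_mul_mul_conj_ofReal_mul, im_add_mul_phaseCoeff_two h,
    im_add_mul_phaseCoeff_three_sub h, normSq_sub_conj]
  simp only [map_mul, conj_ofReal, mul_re, mul_im, conj_re, conj_im, ofReal_re, ofReal_im]
  linear_combination (-(z₁ + z₂).im * z₂.im * (z₁ - z₂).re ^ 2) * h_im

theorem linearIndependent_phaseCoeff_iff (h : (z₁ + z₂).im ≠ 0) :
    LinearIndependent ℝ ![phaseCoeff z₁ z₂ 2, phaseCoeff z₁ z₂ 3] ↔ z₁.im ≠ 0 ∧ z₂.im ≠ 0 := by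
  have h_normSq : normSq (z₁ - conj z₂) ≠ 0 := by
    rw [normSq_sub_conj]
    positivity
  rw [linearIndependent_pair_iff_im_mul_conj_ne_zero, ← mul_ne_zero_iff_left h,
    im_add_mul_im_phaseCoeff_two_mul_conj_phaseCoeff_three h]
  simp [h_normSq]

end PhaseCoeff

theorem statement14_general (z₁ z₂ : ℂ) (h : (z₁ + z₂).im ≠ 0) (a₂ a₃ : ℂ)
    (ha₂ : a₂ = I * (z₁ + z₂) - I * (((z₁ ^ 2 + z₂ ^ 2).im / (z₁ + z₂).im : ℝ) : ℂ))
    (ha₃ : a₃ = I * (z₁ ^ 2 + z₁ * z₂ + z₂ ^ 2) -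
      I * (((z₁ ^ 3 + z₂ ^ 3).im / (z₁ + z₂).im : ℝ) : ℂ)) :
    (z₁ + z₂).im * (a₂ * conj a₃).im
      = -2 * z₁.im * z₂.im * normSq (z₁ - conj z₂) ∧
    (LinearIndependent ℝ ![a₂, a₃] ↔ z₁.im ≠ 0 ∧ z₂.im ≠ 0) := by
  rw [← phaseCoeff_two] at ha₂
  rw [← phaseCoeff_three] at ha₃
  subst ha₂ ha₃
  exact ⟨im_add_mul_im_phaseCoeff_two_mul_conj_phaseCoeff_three h,
    linearIndependent_phaseCoeff_iff h⟩

/-- nondegeneracy of the two-soliton phase coefficients. With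
`a₂ = i(z₁+z₂) − i·Im(z₁²+z₂²)/Im(z₁+z₂)` and
`a₃ = i(z₁²+z₁z₂+z₂²) − i·Im(z₁³+z₂³)/Im(z₁+z₂)`, one has
`Im(z₁+z₂)·Im(a₂·conj(a₃)) = −2·Im z₁·Im z₂·|z₁ − conj(z₂)|²`; in particular, if
`Im z₁ > 0` and `Im z₂ > 0` then `a₂` and `a₃` are linearly independent over `ℝ`. -/
theorem statement14 (z₁ z₂ : ℂ) (h : (z₁ + z₂).im ≠ 0) (a₂ a₃ : ℂ)
    (ha₂ : a₂ = Complex.I * (z₁ + z₂) -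
      Complex.I * (((z₁ ^ 2 + z₂ ^ 2).im / (z₁ + z₂).im : ℝ) : ℂ))
    (ha₃ : a₃ = Complex.I * (z₁ ^ 2 + z₁ * z₂ + z₂ ^ 2) -
      Complex.I * (((z₁ ^ 3 + z₂ ^ 3).im / (z₁ + z₂).im : ℝ) : ℂ)) :
    (z₁ + z₂).im * (a₂ * (starRingEnd ℂ) a₃).im
      = -2 * z₁.im * z₂.im * Complex.normSq (z₁ - (starRingEnd ℂ) z₂) ∧
    (0 < z₁.im → 0 < z₂.im → LinearIndependent ℝ ![a₂, a₃]) := by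
  obtain ⟨h_area, h_indep⟩ := statement14_general z₁ z₂ h a₂ a₃ ha₂ ha₃
  exact ⟨h_area, fun h₁ h₂ => h_indep.mpr ⟨h₁.ne', h₂.ne'⟩⟩
end

section
/- For every N ≥ 1 and R > 0 there exists a constant C = C(N,R) with the following property: for all s, σ ∈ ℂ^N with ‖s‖ ≤ R and ‖σ‖ ≤ R there exist z, w ∈ ℂ^N such that s(z) = s, s(w) = σ, and ‖z − w‖ ≤ C·‖s − σ‖^{1/N}, where s(z) = (e₁(z),…,e_N(z)) denotes the vector of elementary symmetric polynomials of the coordinates of z and ‖·‖ is the Euclidean norm on ℂ^N. -/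
/-!
Fix the roots `z` of the first polynomial and let its coefficient vector move along the segment
from `s` to `σ`. Evaluating the first polynomial at a root `u` of an intermediate one gives a number
of size `O(‖s - σ‖)`, which is the product of the distances from `u` to the `z i`; hence each
intermediate root stays within `r = O(‖s - σ‖ ^ (1 / N))` of some `z i`. Group the `z i` into
clusters, the components of the graph joining points at distance at most `2 * r`, so that a point
cannot be within `r` of two clusters. The coefficient vectors whose roots are distributed among the
clusters like `z`, and those whose roots are distributed differently, come from compact sets of root
tuples. They are therefore disjoint closed sets covering the segment, and by connectedness the
second is empty. So the roots for `σ` can be matched with `z` inside the clusters, each of diameter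
at most `(N - 1) * (2 * r)`.
-/

noncomputable section

/-- The `k`-th elementary symmetric polynomial of `z₁,…,z_N`. -/
def esym (N : ℕ) (z : Fin N → ℂ) (k : ℕ) : ℂ :=
  ∑ t ∈ Finset.powersetCard k (Finset.univ : Finset (Fin N)), ∏ j ∈ t, z j

/-- The Euclidean (ℓ²) norm on `ℂ^N`. -/
def enorm' (N : ℕ) (z : Fin N → ℂ) : ℝ := Real.sqrt (∑ j, Complex.normSq (z j))

/-- The vector `s(z) = (e₁(z),…,e_N(z))` of elementary symmetric polynomials. -/
def sVec (N : ℕ) (z : Fin N → ℂ) : Fin N → ℂ := fun k => esym N z (k.val + 1)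

section Clusters

variable {ι X Y : Type*} [PseudoMetricSpace X]

/-- The graph on the index set of a family of points joining the indices of distinct members at
distance at most `ε`; its connected components are the clusters of the family at scale `ε`. -/
def proximityGraph (z : ι → X) (ε : ℝ) : SimpleGraph ι :=
  SimpleGraph.fromRel fun i j => dist (z i) (z j) ≤ ε

namespace proximityGraph

variable {z : ι → X} {ε : ℝ} {i j : ι}

lemma reachable_of_dist_le (h : dist (z i) (z j) ≤ ε) : (proximityGraph z ε).Reachable i j := by
  rcases eq_or_ne i j with rfl | hij
  · exact .refl _
  · exact SimpleGraph.Adj.reachable ((SimpleGraph.fromRel_adj _ _ _).2 ⟨hij, Or.inl h⟩)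

lemma dist_le_of_adj (h : (proximityGraph z ε).Adj i j) : dist (z i) (z j) ≤ ε := by
  rcases ((SimpleGraph.fromRel_adj _ _ _).1 h).2 with h | h
  · exact h
  · rwa [dist_comm]

lemma dist_le_length_mul (p : (proximityGraph z ε).Walk i j) :
    dist (z i) (z j) ≤ p.length * ε := by
  induction p with
  | nil => simp
  | @cons i k j hik p ih =>
    calc dist (z i) (z j) ≤ dist (z i) (z k) + dist (z k) (z j) := dist_triangle _ _ _
      _ ≤ ε + p.length * ε := add_le_add (dist_le_of_adj hik) ih
      _ = (SimpleGraph.Walk.cons hik p).length * ε := by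
        rw [SimpleGraph.Walk.length_cons]; push_cast; ring

lemma dist_le_of_reachable [Fintype ι] (hε : 0 ≤ ε) (h : (proximityGraph z ε).Reachable i j) :
    dist (z i) (z j) ≤ (Fintype.card ι - 1) * ε := by
  obtain ⟨p, hp⟩ := h.exists_isPath
  have hlength : (p.length : ℝ) ≤ Fintype.card ι - 1 := by
    rw [le_sub_iff_add_le]
    exact_mod_cast hp.length_lt
  exact (dist_le_length_mul p).trans (by gcongr)

end proximityGraph

/-- The assignments `f : ι → ι` that, up to a permutation, send each index into its own cluster at
scale `ε`, that is, hit each cluster of `z` as often as the cluster has indices. -/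
def clusterPreserving (z : ι → X) (ε : ℝ) : Set (ι → ι) :=
  {f | ∃ π : Equiv.Perm ι, ∀ i, (proximityGraph z ε).Reachable i (f (π i))}

/-- The families whose `i`-th member lies within `r` of `z (f i)`. -/
def closeFamilies (z : ι → X) (r : ℝ) (f : ι → ι) : Set (ι → X) :=
  Set.univ.pi fun i => Metric.closedBall (z (f i)) r

lemma clusterPreserving_of_comp_perm_mem {z u : ι → X} {r : ℝ} {f g : ι → ι} {π : Equiv.Perm ι}
    (hf : f ∈ clusterPreserving z (2 * r)) (hu : u ∈ closeFamilies z r f)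
    (huπ : u ∘ π ∈ closeFamilies z r g) : g ∈ clusterPreserving z (2 * r) := by
  obtain ⟨ρ, hρ⟩ := hf
  refine ⟨ρ.trans π.symm, fun i => (hρ i).trans (proximityGraph.reachable_of_dist_le ?_)⟩
  have hfu : dist (u (ρ i)) (z (f (ρ i))) ≤ r := hu (ρ i) trivial
  have hgu : dist (u (ρ i)) (z (g (π.symm (ρ i)))) ≤ r := by
    simpa using huπ (π.symm (ρ i)) trivial
  calc dist (z (f (ρ i))) (z (g (π.symm (ρ i))))
      ≤ dist (u (ρ i)) (z (f (ρ i))) + dist (u (ρ i)) (z (g (π.symm (ρ i)))) :=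
        dist_triangle_left _ _ _
    _ ≤ 2 * r := by linarith

lemma exists_perm_dist_le_of_mem_closeFamilies [Fintype ι] {z u : ι → X} {r : ℝ} {f : ι → ι}
    (hr : 0 ≤ r) (hf : f ∈ clusterPreserving z (2 * r)) (hu : u ∈ closeFamilies z r f) :
    ∃ π : Equiv.Perm ι, ∀ i, dist (z i) (u (π i)) ≤ (2 * Fintype.card ι - 1) * r := by
  obtain ⟨π, hπ⟩ := hf
  refine ⟨π, fun i => ?_⟩
  have hcluster : dist (z i) (z (f (π i))) ≤ (Fintype.card ι - 1) * (2 * r) :=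
    proximityGraph.dist_le_of_reachable (by positivity) (hπ i)
  have hclose : dist (u (π i)) (z (f (π i))) ≤ r := hu (π i) trivial
  linarith [dist_triangle_right (z i) (u (π i)) (z (f (π i)))]

variable [TopologicalSpace Y] [T2Space Y] [ProperSpace X]

lemma isClosed_biUnion_image_closeFamilies [Finite ι] {F : (ι → X) → Y} (hF : Continuous F)
    (z : ι → X) (r : ℝ) (A : Set (ι → ι)) : IsClosed (⋃ f ∈ A, F '' closeFamilies z r f) :=
  A.toFinite.isClosed_biUnion fun f _ =>
    ((isCompact_univ_pi fun i => isCompact_closedBall (z (f i)) r).image hF).isClosed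

theorem exists_fiber_dist_le_of_isPreconnected [Fintype ι] {F : (ι → X) → Y} (hF : Continuous F)
    (hFperm : ∀ u v, F u = F v ↔ ∃ π : Equiv.Perm ι, v = u ∘ π) {S : Set Y}
    (hS : IsPreconnected S) {z : ι → X} (hz : F z ∈ S) {r : ℝ} (hr : 0 ≤ r)
    (hnear : ∀ y ∈ S, ∃ u, F u = y ∧ ∀ i, ∃ j, dist (u i) (z j) ≤ r) {y : Y} (hy : y ∈ S) :
    ∃ w, F w = y ∧ ∀ i, dist (z i) (w i) ≤ (2 * Fintype.card ι - 1) * r := by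
  let A := clusterPreserving z (2 * r)
  let good : Set Y := ⋃ f ∈ A, F '' closeFamilies z r f
  let bad : Set Y := ⋃ f ∈ Aᶜ, F '' closeFamilies z r f
  have hcover : S ⊆ good ∪ bad := by
    intro x hx
    obtain ⟨u, rfl, hu⟩ := hnear x hx
    choose f hf using hu
    have hmem : F u ∈ F '' closeFamilies z r f := Set.mem_image_of_mem F fun i _ => hf i
    by_cases hfA : f ∈ A
    · exact Or.inl (Set.mem_biUnion hfA hmem)
    · exact Or.inr (Set.mem_biUnion hfA hmem)
  have hdisjoint : Disjoint good bad := by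
    simp only [good, bad, Set.disjoint_left, Set.mem_iUnion₂]
    rintro _ ⟨f, hf, u, hu, rfl⟩ ⟨g, hg, v, hv, hvu⟩
    obtain ⟨π, rfl⟩ := (hFperm u v).1 hvu.symm
    exact hg (clusterPreserving_of_comp_perm_mem hf hu hv)
  have hz_good : F z ∈ good :=
    Set.mem_biUnion (x := id) ⟨1, fun _ => .refl _⟩
      (Set.mem_image_of_mem F fun _ _ => Metric.mem_closedBall_self hr)
  have hsub : S ⊆ good := by
    have hsplit := isPreconnected_iff_subset_of_disjoint_closed.1 hS good bad
      (isClosed_biUnion_image_closeFamilies hF z r A)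
      (isClosed_biUnion_image_closeFamilies hF z r Aᶜ) hcover
      (by rw [hdisjoint.inter_eq, Set.inter_empty])
    exact hsplit.resolve_right fun h => Set.disjoint_left.1 hdisjoint hz_good (h hz)
  obtain ⟨f, hf, u, hu, rfl⟩ := Set.mem_iUnion₂.1 (hsub hy)
  obtain ⟨π, hπ⟩ := exists_perm_dist_le_of_mem_closeFamilies hr hf hu
  exact ⟨u ∘ π, ((hFperm u _).2 ⟨π, rfl⟩).symm, hπ⟩

end Clusters

section Enumerations

lemma map_univ_val_eq_iff_exists_perm {ι α : Type*} [Fintype ι] {f g : ι → α} :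
    Finset.univ.val.map f = Finset.univ.val.map g ↔ ∃ π : Equiv.Perm ι, g = f ∘ π := by
  classical
  constructor
  · intro h
    have hfiber (c : α) : Nonempty ({i // g i = c} ≃ {i // f i = c}) := by
      refine ⟨Fintype.equivOfCardEq ?_⟩
      have hcount := congrArg (Multiset.count c) h.symm
      simp only [Multiset.count_map, eq_comm (a := c)] at hcount
      rw [Fintype.card_subtype, Fintype.card_subtype]
      exact hcount
    exact ⟨Equiv.ofFiberEquiv fun c => (hfiber c).some,
      funext fun i => (Equiv.ofFiberEquiv_map _ i).symm⟩
  · rintro ⟨π, rfl⟩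
    rw [← Multiset.map_map, Multiset.map_univ_val_equiv]

lemma exists_map_univ_val_eq {α : Type*} {N : ℕ} {m : Multiset α} (hm : Multiset.card m = N) :
    ∃ z : Fin N → α, Finset.univ.val.map z = m := by
  obtain rfl : m.toList.length = N := m.length_toList.trans hm
  exact ⟨m.toList.get, by rw [Fin.univ_val_map, List.ofFn_get, m.coe_toList]⟩

end Enumerations

section Vieta

open Polynomial

variable {N : ℕ}

/-- The vector `(e₁(z),…,e_N(z))` over an arbitrary commutative semiring, with `e_{k+1}` at index
`k`; over `ℂ` it is `sVec N z`. -/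
def esymmVec {A : Type*} [CommSemiring A] (z : Fin N → A) : Fin N → A :=
  fun k => (Finset.univ.val.map z).esymm (k + 1)

lemma sVec_eq_esymmVec (z : Fin N → ℂ) : sVec N z = esymmVec z := by
  ext k
  rw [sVec, esym, esymmVec, Finset.esymm_map_val]

lemma continuous_esymmVec {A : Type*} [CommSemiring A] [TopologicalSpace A]
    [IsTopologicalSemiring A] :
    Continuous (esymmVec : (Fin N → A) → Fin N → A) := by
  unfold esymmVec
  simp only [Finset.esymm_map_val]
  fun_prop

section CommRing

variable {A : Type*} [CommRing A]

lemma isMonicOfDegree_prod_X_sub_C [Nontrivial A] (z : Fin N → A) :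
    IsMonicOfDegree (∏ i, (X - C (z i))) N :=
  ⟨by simp, monic_prod_X_sub_C z Finset.univ⟩

lemma isRoot_prod_X_sub_C {ι : Type*} [Fintype ι] (z : ι → A) (i : ι) :
    (∏ j, (X - C (z j))).IsRoot (z i) :=
  dvd_iff_isRoot.1 (Finset.dvd_prod_of_mem (fun j => X - C (z j)) (Finset.mem_univ i))

lemma coeff_prod_X_sub_C_eq_esymmVec_rev (z : Fin N → A) (k : Fin N) :
    (∏ i, (X - C (z i))).coeff k = (-1) ^ (N - k : ℕ) * esymmVec z k.rev := by
  have hrev : N - (k : ℕ) = k.rev + 1 := by rw [Fin.val_rev]; omega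
  have hcard : Multiset.card (Finset.univ.val.map z) = N := by simp
  have hvieta := (Finset.univ.val.map z).prod_X_sub_C_coeff (k.is_lt.le.trans_eq hcard.symm)
  rw [Multiset.map_map, hcard] at hvieta
  exact hvieta.trans (by rw [hrev]; rfl)

lemma esymmVec_eq_of_coeff_eq {z s : Fin N → A}
    (h : ∀ k : Fin N, (∏ i, (X - C (z i))).coeff k = (-1) ^ (N - k : ℕ) * s k.rev) :
    esymmVec z = s := by
  ext k
  have hk := h k.rev
  rw [coeff_prod_X_sub_C_eq_esymmVec_rev, Fin.rev_rev] at hk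
  exact (isUnit_neg_one.pow _).mul_left_cancel hk

lemma esymmVec_eq_iff_prod_X_sub_C_eq {z w : Fin N → A} :
    esymmVec z = esymmVec w ↔ ∏ i, (X - C (z i)) = ∏ i, (X - C (w i)) := by
  nontriviality A
  constructor
  · intro h
    ext k
    rcases lt_or_ge k N with hk | hk
    · have hz := coeff_prod_X_sub_C_eq_esymmVec_rev z ⟨k, hk⟩
      rwa [h, ← coeff_prod_X_sub_C_eq_esymmVec_rev w] at hz
    · exact (isMonicOfDegree_prod_X_sub_C z).coeff_eq (isMonicOfDegree_prod_X_sub_C w) hk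
  · intro h
    exact esymmVec_eq_of_coeff_eq fun k => by rw [h, coeff_prod_X_sub_C_eq_esymmVec_rev]

lemma esymmVec_eq_iff_exists_perm [IsDomain A] {z w : Fin N → A} :
    esymmVec z = esymmVec w ↔ ∃ π : Equiv.Perm (Fin N), w = z ∘ π := by
  rw [esymmVec_eq_iff_prod_X_sub_C_eq, ← map_univ_val_eq_iff_exists_perm]
  have hprod (u : Fin N → A) :
      ∏ i, (X - C (u i)) = ((Finset.univ.val.map u).map fun a => X - C a).prod := by
    rw [Multiset.map_map]; rfl
  rw [hprod, hprod]
  exact ⟨fun h => by simpa only [roots_multiset_prod_X_sub_C] using congrArg roots h,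
    fun h => by rw [h]⟩

end CommRing

lemma esymmVec_surjective {K : Type*} [Field K] [IsAlgClosed K] :
    Function.Surjective (esymmVec : (Fin N → K) → Fin N → K) := by
  intro s
  let q : K[X] := ∑ k : Fin N, C ((-1) ^ (N - k : ℕ) * s k.rev) * X ^ (k : ℕ)
  have hq : q.degree < N := degree_sum_fin_lt _
  have hdegree : (X ^ N + q).natDegree = N := natDegree_eq_of_degree_eq_some <| by
    rw [degree_add_eq_left_of_degree_lt (by rwa [degree_X_pow]), degree_X_pow]
  obtain ⟨z, hz⟩ := exists_map_univ_val_eq (IsAlgClosed.card_roots_eq_natDegree.trans hdegree)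
  have hprod : ∏ i, (X - C (z i)) = X ^ N + q := by
    rw [(IsAlgClosed.splits (X ^ N + q)).eq_prod_roots_of_monic (monic_X_pow_add hq), ← hz,
      Multiset.map_map]
    rfl
  refine ⟨z, esymmVec_eq_of_coeff_eq fun k => ?_⟩
  rw [hprod, coeff_add, coeff_X_pow, if_neg k.is_lt.ne, zero_add]
  simp only [q, finsetSum_coeff, coeff_C_mul, coeff_X_pow, Fin.val_inj, mul_ite, mul_one, mul_zero,
    Finset.sum_ite_eq, Finset.mem_univ, if_true]

section NormedField

variable {K : Type*} [NormedField K]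

lemma norm_coeff_prod_X_sub_C_le (z : Fin N → K) (k : Fin N) :
    ‖(∏ i, (X - C (z i))).coeff k‖ ≤ ‖esymmVec z‖ := by
  simpa [coeff_prod_X_sub_C_eq_esymmVec_rev] using norm_le_pi_norm (esymmVec z) k.rev

lemma norm_coeff_prod_X_sub_C_sub_le (z w : Fin N → K) (k : ℕ) :
    ‖(∏ i, (X - C (z i))).coeff k - (∏ i, (X - C (w i))).coeff k‖ ≤
      ‖esymmVec z - esymmVec w‖ := by
  rcases lt_or_ge k N with hk | hk
  · have hz := coeff_prod_X_sub_C_eq_esymmVec_rev z ⟨k, hk⟩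
    have hw := coeff_prod_X_sub_C_eq_esymmVec_rev w ⟨k, hk⟩
    simpa [hz, hw, ← mul_sub] using norm_le_pi_norm (esymmVec z - esymmVec w) (Fin.rev ⟨k, hk⟩)
  · rw [(isMonicOfDegree_prod_X_sub_C z).coeff_eq (isMonicOfDegree_prod_X_sub_C w) hk, sub_self,
      norm_zero]
    exact norm_nonneg _

lemma norm_apply_lt_norm_esymmVec_add_one (z : Fin N → K) (i : Fin N) :
    ‖z i‖ < ‖esymmVec z‖ + 1 := by
  have hmonic := isMonicOfDegree_prod_X_sub_C z
  have hbound : cauchyBound (∏ j, (X - C (z j))) ≤ ‖esymmVec z‖₊ + 1 := by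
    rw [cauchyBound, hmonic.leadingCoeff_eq, hmonic.natDegree_eq, nnnorm_one, div_one]
    gcongr
    exact Finset.sup_le fun k hk => norm_coeff_prod_X_sub_C_le z ⟨k, Finset.mem_range.1 hk⟩
  exact ((isRoot_prod_X_sub_C z i).norm_lt_cauchyBound hmonic.ne_zero).trans_le hbound

lemma exists_norm_sub_lt_of_norm_esymmVec_sub_lt {z w : Fin N → K} {ε : ℝ}
    (h : ‖esymmVec z - esymmVec w‖ < ε) (i : Fin N) :
    ∃ j, ‖w i - z j‖ < ((N + 1) * ε) ^ (N : ℝ)⁻¹ * (‖esymmVec w‖ + 1) := by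
  have hε : 0 < ε := (norm_nonneg _).trans_lt h
  have hmonic (u : Fin N → K) := isMonicOfDegree_prod_X_sub_C u
  have hsplits : (∏ j, (X - C (z j))).Splits := Splits.prod fun j _ => Splits.X_sub_C (z j)
  obtain ⟨b, hb, hlt⟩ := exists_roots_norm_sub_lt_of_norm_coeff_sub_lt hε
    (isRoot_prod_X_sub_C w i) (hmonic w).monic (hmonic z).monic
    ((hmonic z).natDegree_eq.trans (hmonic w).natDegree_eq.symm)
    (fun k => (norm_coeff_prod_X_sub_C_sub_le z w k).trans_lt h) hsplits
  obtain ⟨j, -, hj⟩ : ∃ j ∈ Finset.univ, b - z j = 0 := by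
    simpa [IsRoot, eval_prod, Finset.prod_eq_zero_iff] using isRoot_of_mem_roots hb
  obtain rfl : b = z j := sub_eq_zero.1 hj
  rw [(hmonic w).natDegree_eq] at hlt
  refine ⟨j, hlt.trans_le ?_⟩
  gcongr
  exact max_le (norm_apply_lt_norm_esymmVec_add_one w i).le (by simp)

end NormedField

end Vieta

section Holder

variable {N : ℕ} {z σ : Fin N → ℂ} {R : ℝ}

lemma exists_esymmVec_eq_dist_le_of_norm_sub_lt {ε : ℝ} (hz : ‖esymmVec z‖ ≤ R) (hσ : ‖σ‖ ≤ R)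
    (hε : ‖esymmVec z - σ‖ < ε) :
    ∃ w, esymmVec w = σ ∧
      ∀ i, dist (z i) (w i) ≤ (2 * N - 1) * (((N + 1) * ε) ^ (N : ℝ)⁻¹ * (R + 1)) := by
  have hε0 : 0 < ε := (norm_nonneg _).trans_lt hε
  have hR : 0 ≤ R := (norm_nonneg σ).trans hσ
  have hsegment : ∀ τ ∈ segment ℝ (esymmVec z) σ, ‖τ‖ ≤ R ∧ ‖esymmVec z - τ‖ < ε := by
    intro τ hτ
    constructor
    · simpa using (convex_closedBall (0 : Fin N → ℂ) R).segment_subset (by simpa using hz)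
        (by simpa using hσ) hτ
    · have hle := norm_sub_le_of_mem_segment hτ
      rw [norm_sub_rev, norm_sub_rev σ] at hle
      exact hle.trans_lt hε
  have hnear : ∀ τ ∈ segment ℝ (esymmVec z) σ, ∃ u, esymmVec u = τ ∧
      ∀ i, ∃ j, dist (u i) (z j) ≤ ((N + 1) * ε) ^ (N : ℝ)⁻¹ * (R + 1) := by
    intro τ hτ
    obtain ⟨u, rfl⟩ := esymmVec_surjective τ
    refine ⟨u, rfl, fun i => ?_⟩
    obtain ⟨hu, hzu⟩ := hsegment _ hτ
    obtain ⟨j, hj⟩ := exists_norm_sub_lt_of_norm_esymmVec_sub_lt hzu i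
    exact ⟨j, (dist_eq_norm (u i) (z j)).trans_le (hj.le.trans (by gcongr))⟩
  simpa only [Fintype.card_fin] using
    exists_fiber_dist_le_of_isPreconnected continuous_esymmVec
      (fun _ _ => esymmVec_eq_iff_exists_perm) (convex_segment _ _).isPreconnected
      (left_mem_segment ℝ _ _) (by positivity) hnear (right_mem_segment ℝ _ _)

theorem exists_esymmVec_eq_dist_le (hz : ‖esymmVec z‖ ≤ R) (hσ : ‖σ‖ ≤ R) :
    ∃ w, esymmVec w = σ ∧ ∀ i, dist (z i) (w i) ≤
      (2 * N - 1) * ((2 * (N + 1) * ‖esymmVec z - σ‖) ^ (N : ℝ)⁻¹ * (R + 1)) := by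
  rcases eq_or_ne (esymmVec z) σ with rfl | hne
  · refine ⟨z, rfl, fun i => ?_⟩
    have hN : N ≠ 0 := Fin.pos_iff_nonempty.2 ⟨i⟩ |>.ne'
    simp [hN]
  · have hpos : 0 < ‖esymmVec z - σ‖ := norm_sub_pos_iff.2 hne
    rw [mul_comm 2 (N + 1 : ℝ), mul_assoc (N + 1 : ℝ)]
    exact exists_esymmVec_eq_dist_le_of_norm_sub_lt hz hσ (by linarith)

end Holder

section EuclideanNorm

variable {N : ℕ} (z : Fin N → ℂ)

lemma enorm'_eq_norm_toLp : enorm' N z = ‖WithLp.toLp 2 z‖ := by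
  simp only [enorm', EuclideanSpace.norm_eq, Complex.normSq_eq_norm_sq]

lemma norm_le_enorm' : ‖z‖ ≤ enorm' N z := by
  rw [enorm'_eq_norm_toLp]
  exact (pi_norm_le_iff_of_nonneg (norm_nonneg _)).2 (PiLp.norm_apply_le (WithLp.toLp 2 z))

lemma enorm'_le_sqrt_mul_norm : enorm' N z ≤ √N * ‖z‖ := by
  have h := (PiLp.lipschitzWith_toLp 2 fun _ : Fin N => ℂ).norm_le_mul rfl z
  rw [enorm'_eq_norm_toLp]
  simpa [Real.sqrt_eq_rpow] using h

end EuclideanNorm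

/-- 1/N-Hölder continuity of roots in terms of coefficients: for every
`N ≥ 1` and `R > 0` there is `C = C(N,R)` such that any two coefficient vectors
`s, σ ∈ ℂ^N` of norm at most `R` admit root tuples `z, w` with `s(z) = s`, `s(w) = σ`
and `‖z − w‖ ≤ C·‖s − σ‖^{1/N}`. -/
theorem statement17 (N : ℕ) (hN : 1 ≤ N) (R : ℝ) (hR : 0 < R) :
    ∃ C : ℝ, ∀ s σ : Fin N → ℂ, enorm' N s ≤ R → enorm' N σ ≤ R →
      ∃ z w : Fin N → ℂ, sVec N z = s ∧ sVec N w = σ ∧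
        enorm' N (z - w) ≤ C * enorm' N (s - σ) ^ ((N : ℝ)⁻¹) := by
  have hcoef : (0 : ℝ) ≤ 2 * N - 1 := by
    have : (1 : ℝ) ≤ N := by exact_mod_cast hN
    linarith
  have : Nonempty (Fin N) := Fin.pos_iff_nonempty.1 hN
  refine ⟨√N * ((2 * N - 1) * ((2 * (N + 1)) ^ (N : ℝ)⁻¹ * (R + 1))), fun s σ hs hσ => ?_⟩
  obtain ⟨z, rfl⟩ := esymmVec_surjective s
  obtain ⟨w, rfl, hzw⟩ :=
    exists_esymmVec_eq_dist_le ((norm_le_enorm' _).trans hs) ((norm_le_enorm' _).trans hσ)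
  refine ⟨z, w, sVec_eq_esymmVec z, sVec_eq_esymmVec w, ?_⟩
  set δ := esymmVec z - esymmVec w
  calc enorm' N (z - w) ≤ √N * ‖z - w‖ := enorm'_le_sqrt_mul_norm _
    _ ≤ √N * ((2 * N - 1) * ((2 * (N + 1) * ‖δ‖) ^ (N : ℝ)⁻¹ * (R + 1))) := by
      gcongr
      exact (pi_norm_le_iff_of_nonempty _).2 fun i => dist_eq_norm (z i) (w i) ▸ hzw i
    _ = √N * ((2 * N - 1) * ((2 * (N + 1)) ^ (N : ℝ)⁻¹ * (R + 1))) * ‖δ‖ ^ (N : ℝ)⁻¹ := by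
      rw [Real.mul_rpow (by positivity) (norm_nonneg _)]
      ring
    _ ≤ _ := by
      gcongr
      exact norm_le_enorm' _
end
end

section
/- Let N ≥ 1 and let U ⊆ ℂ be open. Let e : ℂ^N → ℂ^N be the elementary symmetric polynomial map, e(z) = (e₁(z),…,e_N(z)). Suppose f : U^N → ℂ is analytic and invariant under all permutations of its N coordinates. Then the image S = e(U^N) is an open subset of ℂ^N, and there exists an analytic function g : S → ℂ such that f(z) = g(e(z)) for all z ∈ U^N. -/
noncomputable section

/-- The elementary symmetric polynomial map `e : ℂ^N → ℂ^N`, `e(z) = (e₁(z),…,e_N(z))`. -/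
def esymMap (N : ℕ) (z : Fin N → ℂ) : Fin N → ℂ := fun k => esym N z (k.val + 1)

/-!
Near the image of a point `c`, the factor `g` is a residue integral. Let `P_s` be the monic
polynomial with elementary symmetric functions `s`, let `D x = ∏_{i ≠ j} (x i - x j)`, and integrate
`D x * f x / ∏ i, P_s (x i)` over a small torus around `c`. The result is analytic in `s`.
If `s = e(z)` and `z` has distinct coordinates, expand each `1 / P_s (x i)` into partial fractions
and apply Cauchy's formula: the terms with a repeated root vanish because `D` does, and the others
are indexed by permutations, of which only those fixing `c` contribute. By symmetry the integral is
`|Stab c| (2πi)^N f(z)`. Points with distinct coordinates are dense, so continuity gives the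
factorization everywhere near `c`.

The fibres of `e` are permutation orbits, which makes `g` globally well defined. The Cauchy bound on
roots makes `e` proper, hence a quotient map, and it is open because the saturation of an open set
is a finite union of its coordinate permutations.
-/

open Complex Function Metric Polynomial Set Topology

variable {N : ℕ}

section VietaPolynomial

variable {R : Type*} [CommRing R]

/-- The monic polynomial `X ^ N - s₁ X ^ (N - 1) + s₂ X ^ (N - 2) - ⋯` whose coefficients are, up
to Vieta's signs, the entries of `s`. As vectors are indexed from `0`, the coefficient `s₁` is
`s 0`. -/
def vietaPoly (s : Fin N → R) : R[X] :=
  X ^ N + ∑ k : Fin N, C ((-1) ^ (k.val + 1) * s k) * X ^ k.rev.val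

lemma vietaPoly_coeff_rev (s : Fin N → R) (k : Fin N) :
    (vietaPoly s).coeff k.rev = (-1) ^ (k.val + 1) * s k := by
  rw [vietaPoly, coeff_add, coeff_X_pow, if_neg k.rev.isLt.ne, zero_add, finsetSum_coeff,
    Finset.sum_eq_single k]
  · rw [coeff_C_mul, coeff_X_pow, if_pos rfl, mul_one]
  · intro j _ hj
    rw [coeff_C_mul, coeff_X_pow, if_neg fun h => hj (Fin.rev_injective (Fin.ext h)).symm, mul_zero]
  · simp

lemma vietaPoly_injective : Injective (vietaPoly : (Fin N → R) → R[X]) := by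
  intro s t hst
  funext k
  have hk := congrArg (fun p => p.coeff k.rev) hst
  simp only [vietaPoly_coeff_rev] at hk
  exact (IsUnit.neg isUnit_one |>.pow _).mul_left_cancel hk

lemma degree_vietaPoly_sub_X_pow_lt (s : Fin N → R) :
    (vietaPoly s - X ^ N).degree < (N : WithBot ℕ) := by
  rw [vietaPoly, add_sub_cancel_left]
  refine (degree_sum_le _ _).trans_lt ((Finset.sup_lt_iff (WithBot.bot_lt_coe N)).2 fun k _ => ?_)
  exact (degree_C_mul_X_pow_le _ _).trans_lt (Nat.cast_lt.2 k.rev.isLt)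

lemma monic_vietaPoly (s : Fin N → R) : (vietaPoly s).Monic := by
  simpa only [add_sub_cancel] using monic_X_pow_add (degree_vietaPoly_sub_X_pow_lt s)

lemma natDegree_vietaPoly [Nontrivial R] (s : Fin N → R) : (vietaPoly s).natDegree = N := by
  have hdeg := degree_vietaPoly_sub_X_pow_lt s
  rw [← degree_X_pow (R := R) N] at hdeg
  rw [← add_sub_cancel (X ^ N) (vietaPoly s), natDegree_add_eq_left_of_degree_lt hdeg,
    natDegree_X_pow]

end VietaPolynomial

lemma vietaPoly_esymMap (z : Fin N → ℂ) : vietaPoly (esymMap N z) = ∏ j, (X - C (z j)) := by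
  have hexp := Multiset.prod_X_sub_X_eq_sum_esymm (Finset.univ.val.map z)
  rw [Multiset.map_map, Multiset.card_map, Finset.card_val, Finset.card_fin,
    Finset.sum_range_succ', Finset.sum_range] at hexp
  change _ = (Finset.univ.val.map ((fun a => X - C a) ∘ z)).prod
  rw [hexp, vietaPoly, add_comm]
  congr 1
  · refine Finset.sum_congr rfl fun k _ => ?_
    rw [Finset.esymm_map_val, Fin.val_rev]
    simp only [esymMap, esym, map_mul, map_pow, map_neg, map_one, mul_assoc]
  · simp [Multiset.esymm]

lemma eval_vietaPoly_esymMap (z : Fin N → ℂ) (x : ℂ) :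
    (vietaPoly (esymMap N z)).eval x = ∏ j, (x - z j) := by
  rw [vietaPoly_esymMap, eval_prod]
  simp only [eval_sub, eval_X, eval_C]

lemma roots_vietaPoly_esymMap (z : Fin N → ℂ) :
    (vietaPoly (esymMap N z)).roots = Finset.univ.val.map z := by
  rw [vietaPoly_esymMap, ← roots_multiset_prod_X_sub_C (Finset.univ.val.map z), Multiset.map_map]
  rfl

lemma esymMap_surjective : Surjective (esymMap N) := by
  intro s
  have hcard : (vietaPoly s).roots.card = (vietaPoly s).natDegree :=
    splits_iff_card_roots.1 (IsAlgClosed.splits _)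
  obtain ⟨l, hl⟩ := Quot.exists_rep (vietaPoly s).roots
  replace hl : (l : Multiset ℂ) = (vietaPoly s).roots := hl
  obtain rfl : l.length = N := by rw [← Multiset.coe_card, hl, hcard, natDegree_vietaPoly]
  have hmap : Finset.univ.val.map l.get = (vietaPoly s).roots := by
    rw [Fin.univ_val_map, List.ofFn_get, hl]
  refine ⟨l.get, vietaPoly_injective ?_⟩
  rw [← prod_multiset_X_sub_C_of_monic_of_roots_card_eq (monic_vietaPoly s) hcard, ← hmap,
    Multiset.map_map, vietaPoly_esymMap]
  rfl

lemma esymMap_comp_perm (π : Equiv.Perm (Fin N)) (z : Fin N → ℂ) :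
    esymMap N (z ∘ π) = esymMap N z := by
  apply vietaPoly_injective
  rw [vietaPoly_esymMap, vietaPoly_esymMap]
  exact Equiv.prod_comp π fun j => X - C (z j)

lemma exists_perm_comp_eq_of_map_univ_eq {ι α : Type*} [Fintype ι] {z w : ι → α}
    (h : Finset.univ.val.map z = Finset.univ.val.map w) : ∃ π : Equiv.Perm ι, z ∘ π = w := by
  classical
  have hfibre (a : α) : Nonempty ({i // w i = a} ≃ {i // z i = a}) := by
    have hcount := congrArg (Multiset.count a) h
    simp only [Multiset.count_map, eq_comm (a := a)] at hcount
    rw [← Fintype.card_eq, Fintype.card_subtype, Fintype.card_subtype]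
    exact hcount.symm
  let e (a : α) := (hfibre a).some
  refine ⟨(Equiv.sigmaFiberEquiv w).symm.trans
    ((Equiv.sigmaCongrRight e).trans (Equiv.sigmaFiberEquiv z)), ?_⟩
  funext i
  exact (e (w i) ⟨i, rfl⟩).2

lemma exists_perm_of_esymMap_eq {z w : Fin N → ℂ} (h : esymMap N z = esymMap N w) :
    ∃ π : Equiv.Perm (Fin N), z ∘ π = w :=
  exists_perm_comp_eq_of_map_univ_eq <| by
    rw [← roots_vietaPoly_esymMap, h, roots_vietaPoly_esymMap]

lemma continuous_esymMap : Continuous (esymMap N) := by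
  unfold esymMap esym
  fun_prop

lemma norm_le_norm_esymMap_add_one (z : Fin N → ℂ) : ‖z‖ ≤ ‖esymMap N z‖ + 1 := by
  refine (pi_norm_le_iff_of_nonneg (by positivity)).2 fun j => ?_
  set p := vietaPoly (esymMap N z) with hp
  have hmonic : p.Monic := monic_vietaPoly _
  have hroot : p.IsRoot (z j) := by
    rw [IsRoot, hp, eval_vietaPoly_esymMap]
    exact Finset.prod_eq_zero (Finset.mem_univ j) (sub_self _)
  have hbound : p.cauchyBound ≤ ‖esymMap N z‖₊ + 1 := by
    rw [cauchyBound, hmonic.leadingCoeff, nnnorm_one, div_one, natDegree_vietaPoly]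
    gcongr
    refine Finset.sup_le fun k hk => ?_
    have hcoeff := vietaPoly_coeff_rev (esymMap N z) (Fin.rev ⟨k, Finset.mem_range.1 hk⟩)
    rw [Fin.rev_rev] at hcoeff
    rw [hp, hcoeff, nnnorm_mul, nnnorm_pow, nnnorm_neg, nnnorm_one, one_pow, one_mul]
    exact nnnorm_le_pi_nnnorm _ _
  exact (hroot.norm_lt_cauchyBound hmonic.ne_zero).le.trans (by exact_mod_cast hbound)

lemma isProperMap_esymMap : IsProperMap (esymMap N) := by
  refine isProperMap_iff_tendsto_cocompact.2 ⟨continuous_esymMap, ?_⟩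
  rw [← cobounded_eq_cocompact, ← tendsto_norm_atTop_iff_cobounded]
  refine .atTop_of_add_const 1 ?_
  exact Filter.tendsto_atTop_mono norm_le_norm_esymMap_add_one tendsto_norm_cobounded_atTop

lemma preimage_image_esymMap (W : Set (Fin N → ℂ)) :
    esymMap N ⁻¹' (esymMap N '' W) = ⋃ π : Equiv.Perm (Fin N), (fun z => z ∘ π) ⁻¹' W := by
  ext z
  simp only [mem_preimage, mem_image, mem_iUnion]
  constructor
  · rintro ⟨w, hw, hwz⟩
    obtain ⟨π, rfl⟩ := exists_perm_of_esymMap_eq hwz.symm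
    exact ⟨π, hw⟩
  · rintro ⟨π, hπ⟩
    exact ⟨_, hπ, esymMap_comp_perm π z⟩

lemma isOpenMap_esymMap : IsOpenMap (esymMap N) := by
  intro W hW
  have hquot : IsQuotientMap (esymMap N) :=
    isProperMap_esymMap.isClosedMap.isQuotientMap continuous_esymMap esymMap_surjective
  rw [← hquot.isOpen_preimage, preimage_image_esymMap]
  exact isOpen_iUnion fun π => hW.preimage (by fun_prop)

section TorusIntegral

open MeasureTheory

variable {F : Type*} [NormedAddCommGroup F] {c : Fin N → ℂ} {R : Fin N → ℝ}

lemma torusMap_mem_pi_sphere (hR : ∀ i, 0 ≤ R i) (θ : Fin N → ℝ) :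
    torusMap c R θ ∈ univ.pi fun i => sphere (c i) (R i) := by
  intro i _
  simp [torusMap, abs_of_nonneg (hR i)]

lemma continuous_torusMap (c : Fin N → ℂ) (R : Fin N → ℝ) : Continuous (torusMap c R) := by
  unfold torusMap
  fun_prop

lemma pi_sphere_subset_pi_closedBall :
    (univ.pi fun i => sphere (c i) (R i)) ⊆ univ.pi fun i => closedBall (c i) (R i) :=
  pi_mono fun _ _ => sphere_subset_closedBall

lemma torusIntegrable_of_continuousOn (hR : ∀ i, 0 ≤ R i) {f : (Fin N → ℂ) → F}
    (hf : ContinuousOn f (univ.pi fun i => sphere (c i) (R i))) : TorusIntegrable f c R :=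
  (hf.comp_continuous (continuous_torusMap c R)
    (torusMap_mem_pi_sphere hR)).continuousOn.integrableOn_compact isCompact_Icc

variable [NormedSpace ℂ F]

lemma torusIntegral_congr (hR : ∀ i, 0 ≤ R i) {f g : (Fin N → ℂ) → F}
    (hfg : EqOn f g (univ.pi fun i => sphere (c i) (R i))) :
    (∯ x in T(c, R), f x) = ∯ x in T(c, R), g x := by
  simp only [torusIntegral, hfg (torusMap_mem_pi_sphere hR _)]

lemma torusIntegral_finsetSum {ι : Type*} (s : Finset ι) {f : ι → (Fin N → ℂ) → F}
    (hf : ∀ i ∈ s, TorusIntegrable (f i) c R) :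
    (∯ x in T(c, R), ∑ i ∈ s, f i x) = ∑ i ∈ s, ∯ x in T(c, R), f i x := by
  simp only [torusIntegral, Finset.smul_sum]
  exact integral_finsetSum _ fun i hi => (hf i hi).function_integrable

end TorusIntegral

section CauchyFormula

variable {F : Type*} [NormedAddCommGroup F] [NormedSpace ℂ F]

lemma circleIntegral_sub_inv_smul_of_notMem_closedBall {c w : ℂ} {R : ℝ} (hR : 0 ≤ R)
    {f : ℂ → F} (hf : DifferentiableOn ℂ f (closedBall c R)) (hw : w ∉ closedBall c R) :
    (∮ x in C(c, R), (x - w)⁻¹ • f x) = 0 := by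
  refine DiffContOnCl.circleIntegral_eq_zero hR (DifferentiableOn.diffContOnCl ?_)
  refine DifferentiableOn.mono (.smul (.inv (by fun_prop) fun x hx => ?_) hf)
    closure_ball_subset_closedBall
  exact sub_ne_zero.2 fun hxw => hw (hxw ▸ hx)

lemma circleIntegral_sub_inv_of_notMem_closedBall {c w : ℂ} {R : ℝ} (hR : 0 ≤ R)
    (hw : w ∉ closedBall c R) : (∮ x in C(c, R), (x - w)⁻¹) = 0 := by
  simpa using circleIntegral_sub_inv_smul_of_notMem_closedBall hR
    (differentiableOn_const (1 : ℂ)) hw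

variable [CompleteSpace F]

lemma circleIntegral_sub_inv_smul_of_notMem_sphere {c w : ℂ} {R : ℝ} (hR : 0 ≤ R) {f : ℂ → F}
    (hf : DifferentiableOn ℂ f (closedBall c R)) (hw : w ∉ sphere c R) :
    (∮ x in C(c, R), (x - w)⁻¹ • f x) = (∮ x in C(c, R), (x - w)⁻¹) • f w := by
  by_cases hball : w ∈ ball c R
  · rw [hf.circleIntegral_sub_inv_smul hball, circleIntegral.integral_sub_inv_of_mem_ball hball]
  · have hout : w ∉ closedBall c R := by
      rw [← ball_union_sphere]
      exact not_or_intro hball hw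
    rw [circleIntegral_sub_inv_smul_of_notMem_closedBall hR hf hout,
      circleIntegral_sub_inv_of_notMem_closedBall hR hout, zero_smul]

lemma cons_mem_pi_closedBall {c : Fin (N + 1) → ℂ} {R : Fin (N + 1) → ℝ} {x : ℂ} {y : Fin N → ℂ}
    (hx : x ∈ closedBall (c 0) (R 0))
    (hy : y ∈ univ.pi fun i => closedBall (c (Fin.succ i)) (R (Fin.succ i))) :
    (Fin.cons x y : Fin (N + 1) → ℂ) ∈ univ.pi fun i => closedBall (c i) (R i) := by
  intro i _
  cases i using Fin.cases with
  | zero => exact hx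
  | succ i => exact hy i (mem_univ i)

lemma continuousOn_prod_sub_inv {c w : Fin N → ℂ} {R : Fin N → ℝ}
    (hw : ∀ i, w i ∉ sphere (c i) (R i)) :
    ContinuousOn (fun x : Fin N → ℂ => ∏ i, (x i - w i)⁻¹)
      (univ.pi fun i => sphere (c i) (R i)) :=
  continuousOn_finsetProd _ fun i _ => .inv₀ (by fun_prop) fun _ hx =>
    sub_ne_zero.2 fun hxw => hw i (hxw ▸ hx i (mem_univ i))

lemma torusIntegral_prod_sub_inv_smul {c w : Fin N → ℂ} {R : Fin N → ℝ} (hR : ∀ i, 0 ≤ R i)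
    {f : (Fin N → ℂ) → F} (hf : DifferentiableOn ℂ f (univ.pi fun i => closedBall (c i) (R i)))
    (hw : ∀ i, w i ∉ sphere (c i) (R i)) :
    (∯ x in T(c, R), (∏ i, (x i - w i)⁻¹) • f x) =
      (∏ i, ∮ x in C(c i, R i), (x - w i)⁻¹) • f w := by
  induction N with
  | zero => simp [Subsingleton.elim c w]
  | succ N ih =>
    have hint : TorusIntegrable (fun x => (∏ i, (x i - w i)⁻¹) • f x) c R :=
      torusIntegrable_of_continuousOn hR ((continuousOn_prod_sub_inv hw).smul
        (hf.continuousOn.mono pi_sphere_subset_pi_closedBall))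
    have hinner : EqOn
        (fun x => ∯ y in T(c ∘ Fin.succ, R ∘ Fin.succ),
          (∏ i, ((Fin.cons x y : Fin (N + 1) → ℂ) i - w i)⁻¹) • f (Fin.cons x y))
        (fun x => (∏ i : Fin N, ∮ y in C(c i.succ, R i.succ), (y - w i.succ)⁻¹) •
          (x - w 0)⁻¹ • f (Fin.cons x (Fin.tail w))) (sphere (c 0) (R 0)) := by
      intro x hx
      have hfx : DifferentiableOn ℂ (fun y : Fin N → ℂ => f (Fin.cons x y))
          (univ.pi fun i => closedBall (c (Fin.succ i)) (R (Fin.succ i))) :=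
        hf.comp (by fun_prop) fun y => cons_mem_pi_closedBall (sphere_subset_closedBall hx)
      simp only [Fin.prod_univ_succ, Fin.cons_zero, Fin.cons_succ, mul_smul, torusIntegral_smul]
      rw [smul_comm]
      congr 1
      exact ih (fun i => hR i.succ) hfx fun i => hw i.succ
    rw [torusIntegral_succ hint, circleIntegral.integral_congr (hR 0) hinner,
      circleIntegral.integral_smul, Fin.prod_univ_succ, mul_comm, mul_smul]
    by_cases htail : Fin.tail w ∈ univ.pi fun i => closedBall (c (Fin.succ i)) (R (Fin.succ i))
    · have hfw : DifferentiableOn ℂ (fun x => f (Fin.cons x (Fin.tail w)))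
          (closedBall (c 0) (R 0)) :=
        hf.comp (by fun_prop) fun x hx => cons_mem_pi_closedBall hx htail
      rw [circleIntegral_sub_inv_smul_of_notMem_sphere (hR 0) hfw (hw 0), Fin.cons_self_tail]
    · simp only [mem_univ_pi, not_forall] at htail
      obtain ⟨i, hi⟩ := htail
      rw [Finset.prod_eq_zero (Finset.mem_univ i)
        (circleIntegral_sub_inv_of_notMem_closedBall (hR _) hi), zero_smul, zero_smul]

end CauchyFormula

section AnalyticDependence

open MeasureTheory

lemma ringInverse_continuousMap_apply {𝕜 T : Type*} [NontriviallyNormedField 𝕜]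
    [TopologicalSpace T] {u : C(T, 𝕜)} (hu : IsUnit u) (t : T) : Ring.inverse u t = (u t)⁻¹ :=
  eq_inv_of_mul_eq_one_left (congrArg (fun v : C(T, 𝕜) => v t) (Ring.inverse_mul_cancel u hu))

variable {𝕜 : Type*} [RCLike 𝕜] {T : Type*} [TopologicalSpace T] [CompactSpace T]
  [MeasurableSpace T] [OpensMeasurableSpace T] {μ : Measure T}
  {F : Type*} [NormedAddCommGroup F] [NormedSpace 𝕜 F]

lemma integrable_continuousMap_smul (u : C(T, 𝕜)) {h : T → F} (hh : Integrable h μ) :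
    Integrable (fun t => u t • h t) μ :=
  hh.bdd_smul ‖u‖ u.continuous.aestronglyMeasurable (.of_forall u.norm_coe_le_norm)

variable [NormedSpace ℝ F] [SMulCommClass ℝ 𝕜 F]

/-- Integration against an integrable vector-valued density `h`, as a continuous linear functional
on the continuous functions on a compact space. -/
def integralSMulCLM {h : T → F} (hh : Integrable h μ) : C(T, 𝕜) →L[𝕜] F :=
  LinearMap.mkContinuous
    { toFun := fun u => ∫ t, u t • h t ∂μ
      map_add' := fun u v => by
        simp only [ContinuousMap.add_apply, add_smul]
        exact integral_add (integrable_continuousMap_smul u hh) (integrable_continuousMap_smul v hh)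
      map_smul' := fun a u => by
        simp only [ContinuousMap.smul_apply, smul_eq_mul, mul_smul, RingHom.id_apply]
        exact integral_smul a _ }
    (∫ t, ‖h t‖ ∂μ) fun u => by
      rw [mul_comm, ← integral_const_mul]
      refine norm_integral_le_of_norm_le (hh.norm.const_mul _) (.of_forall fun t => ?_)
      rw [norm_smul]
      gcongr
      exact u.norm_coe_le_norm t

lemma analyticAt_integral_inv_smul {E : Type*} [NormedAddCommGroup E] [NormedSpace 𝕜 E]
    {q : E → C(T, 𝕜)} {s₀ : E} (hq : AnalyticAt 𝕜 q s₀) (hq₀ : ∀ t, q s₀ t ≠ 0)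
    {h : T → F} (hh : Integrable h μ) :
    AnalyticAt 𝕜 (fun s => ∫ t, (q s t)⁻¹ • h t ∂μ) s₀ := by
  have hunit : IsUnit (q s₀) := (ContinuousMap.isUnit_iff_forall_ne_zero _).2 hq₀
  have hinv : AnalyticAt 𝕜 (fun s => Ring.inverse (q s)) s₀ :=
    (analyticAt_inverse hunit.unit).comp_of_eq hq rfl
  refine (((integralSMulCLM hh).analyticAt _).comp hinv).congr ?_
  filter_upwards [hq.continuousAt.eventually (Units.isOpen.mem_nhds hunit)] with s hs
  change ∫ t, Ring.inverse (q s) t • h t ∂μ = _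
  simp only [ringInverse_continuousMap_apply hs]

end AnalyticDependence

section AnalyticTorus

open MeasureTheory

lemma analyticAt_aeval_vietaPoly {𝕜 : Type*} [NontriviallyNormedField 𝕜] {A : Type*}
    [NormedRing A] [NormedAlgebra 𝕜 A] (a : A) (s₀ : Fin N → 𝕜) :
    AnalyticAt 𝕜 (fun s => aeval a (vietaPoly s)) s₀ := by
  simp only [vietaPoly, map_add, map_sum, map_mul, map_pow, aeval_X, aeval_C]
  refine analyticAt_const.add (Finset.analyticAt_fun_sum _ fun k _ => ?_)
  refine AnalyticAt.mul (AnalyticAt.mul analyticAt_const ?_) analyticAt_const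
  exact ((algebraMapCLM 𝕜 A).comp (ContinuousLinearMap.proj k)).analyticAt s₀

lemma analyticAt_torusIntegral_inv_vietaPoly_smul {F : Type*} [NormedAddCommGroup F]
    [NormedSpace ℂ F] {c : Fin N → ℂ} {R : Fin N → ℝ} (hR : ∀ i, 0 ≤ R i) {f : (Fin N → ℂ) → F}
    (hf : TorusIntegrable f c R) {s₀ : Fin N → ℂ}
    (hs₀ : ∀ i, ∀ x ∈ sphere (c i) (R i), (vietaPoly s₀).eval x ≠ 0) :
    AnalyticAt ℂ
      (fun s => ∯ x in T(c, R), (∏ i, ((vietaPoly s).eval (x i))⁻¹) • f x) s₀ := by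
  let cube := Icc (0 : Fin N → ℝ) fun _ => 2 * Real.pi
  have : CompactSpace cube := isCompact_iff_compactSpace.1 isCompact_Icc
  let coord (i : Fin N) : C(cube, ℂ) :=
    ⟨fun θ => torusMap c R θ i, ((continuous_apply i).comp (continuous_torusMap c R)).comp
      continuous_subtype_val⟩
  let q (s : Fin N → ℂ) : C(cube, ℂ) := ∏ i, aeval (coord i) (vietaPoly s)
  have hq_apply (s : Fin N → ℂ) (θ : cube) :
      q s θ = ∏ i, (vietaPoly s).eval (torusMap c R θ i) := by
    simp only [q, ContinuousMap.prod_apply, aeval_continuousMap_apply, coord,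
      ContinuousMap.coe_mk]
  have hq : AnalyticAt ℂ q s₀ :=
    Finset.analyticAt_fun_prod _ fun i _ => analyticAt_aeval_vietaPoly (coord i) s₀
  have hq₀ (θ : cube) : q s₀ θ ≠ 0 := by
    rw [hq_apply]
    exact Finset.prod_ne_zero_iff.2 fun i _ =>
      hs₀ i _ (torusMap_mem_pi_sphere hR _ i (mem_univ i))
  have hdensity : Integrable (fun θ : cube =>
      (∏ i, (R i : ℂ) * exp (θ.1 i * I) * I) • f (torusMap c R θ))
      (Measure.comap Subtype.val volume) :=
    (integrableOn_iff_comap_subtypeVal measurableSet_Icc).1 hf.function_integrable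
  refine (analyticAt_integral_inv_smul hq hq₀ hdensity).congr (.of_forall fun s => ?_)
  beta_reduce
  rw [torusIntegral, ← integral_subtype_comap measurableSet_Icc]
  refine integral_congr_ae (.of_forall fun θ => ?_)
  simp only [hq_apply, ← Finset.prod_inv_distrib]
  exact smul_comm _ _ _

end AnalyticTorus

section PartialFractions

variable {ι : Type*} [Fintype ι] [DecidableEq ι]

/-- The product of all differences `x i - x j` with `i ≠ j`; it is, up to sign, the discriminant of
the monic polynomial with roots `x i`. -/
def offDiagDiffProd {R : Type*} [CommRing R] (x : ι → R) : R :=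
  ∏ i, ∏ j ∈ Finset.univ.erase i, (x i - x j)

lemma offDiagDiffProd_comp_perm {R : Type*} [CommRing R] (x : ι → R) (π : Equiv.Perm ι) :
    offDiagDiffProd (x ∘ π) = offDiagDiffProd x :=
  Fintype.prod_equiv π _ _ fun _ => Finset.prod_equiv π (by simp) fun _ _ => rfl

lemma offDiagDiffProd_of_not_injective {R : Type*} [CommRing R] {x : ι → R}
    (hx : ¬ Injective x) : offDiagDiffProd x = 0 := by
  obtain ⟨i, j, hxij, hij⟩ := not_injective_iff.1 hx
  refine Finset.prod_eq_zero (Finset.mem_univ i) (Finset.prod_eq_zero (i := j) ?_ ?_)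
  · exact Finset.mem_erase.2 ⟨hij.symm, Finset.mem_univ j⟩
  · exact sub_eq_zero.2 hxij

variable {K : Type*} [Field K]

lemma offDiagDiffProd_ne_zero {x : ι → K} (hx : Injective x) : offDiagDiffProd x ≠ 0 :=
  Finset.prod_ne_zero_iff.2 fun _ _ => Finset.prod_ne_zero_iff.2 fun _ hj =>
    sub_ne_zero.2 fun hxij => (Finset.ne_of_mem_erase hj) (hx hxij).symm

lemma prod_nodalWeight (z : ι → K) :
    ∏ i, Lagrange.nodalWeight Finset.univ z i = (offDiagDiffProd z)⁻¹ := by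
  simp only [Lagrange.nodalWeight, offDiagDiffProd, Finset.prod_inv_distrib]

lemma inv_prod_sub_eq_sum_nodalWeight [Nonempty ι] {z : ι → K} (hz : Injective z) {x : K}
    (hx : ∀ j, x ≠ z j) :
    (∏ j, (x - z j))⁻¹ = ∑ j, Lagrange.nodalWeight Finset.univ z j * (x - z j)⁻¹ := by
  have hinterp := Lagrange.eval_interpolate_not_at_node (s := Finset.univ) 1 fun j _ => hx j
  rw [Lagrange.interpolate_one hz.injOn Finset.univ_nonempty, eval_one,
    Lagrange.eval_nodal] at hinterp
  simp only [Pi.one_apply, mul_one] at hinterp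
  exact inv_eq_of_mul_eq_one_right hinterp.symm

lemma prod_inv_prod_sub_eq_sum_nodalWeight {z : ι → K} (hz : Injective z) {x : ι → K}
    (hx : ∀ i j, x i ≠ z j) :
    ∏ i, (∏ j, (x i - z j))⁻¹ = ∑ σ : ι → ι,
      (∏ i, Lagrange.nodalWeight Finset.univ z (σ i)) * ∏ i, (x i - z (σ i))⁻¹ := by
  have hfactor (i : ι) : (∏ j, (x i - z j))⁻¹ =
      ∑ j, Lagrange.nodalWeight Finset.univ z j * (x i - z j)⁻¹ :=
    have : Nonempty ι := ⟨i⟩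
    inv_prod_sub_eq_sum_nodalWeight hz (hx i)
  simp only [hfactor, Finset.prod_univ_sum, Fintype.piFinset_univ, Finset.prod_mul_distrib]

end PartialFractions

section ResidueIntegral

variable {F : Type*} [NormedAddCommGroup F] [NormedSpace ℂ F] {c z : Fin N → ℂ}
  {f : (Fin N → ℂ) → F}

/-- The multidimensional residue integral of `f` over the torus `T(c, R)`. The denominator
`∏ i, P (x i)`, where `P` is the monic polynomial with signed coefficients `s`, depends on the
roots of `P` only through `s`; the factor `offDiagDiffProd x` removes the residues at points `x`
with repeated coordinates. -/
def residueIntegral (c : Fin N → ℂ) (R : Fin N → ℝ) (f : (Fin N → ℂ) → F) (s : Fin N → ℂ) : F :=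
  ∯ x in T(c, R), (∏ i, ((vietaPoly s).eval (x i))⁻¹) • offDiagDiffProd x • f x

lemma differentiable_offDiagDiffProd {ι : Type*} [Fintype ι] [DecidableEq ι] :
    Differentiable ℂ (offDiagDiffProd : (ι → ℂ) → ℂ) := by
  unfold offDiagDiffProd
  fun_prop

lemma analyticAt_residueIntegral_esymMap {R : Fin N → ℝ} (hR : ∀ i, 0 ≤ R i)
    (hf : ContinuousOn f (univ.pi fun i => sphere (c i) (R i)))
    (hz : ∀ i j, z j ∉ sphere (c i) (R i)) :
    AnalyticAt ℂ (residueIntegral c R f) (esymMap N z) := by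
  refine analyticAt_torusIntegral_inv_vietaPoly_smul hR (torusIntegrable_of_continuousOn hR
    (differentiable_offDiagDiffProd.continuous.continuousOn.smul hf)) fun i x hx => ?_
  rw [eval_vietaPoly_esymMap]
  exact Finset.prod_ne_zero_iff.2 fun j _ => sub_ne_zero.2 fun hxz => hz i j (hxz ▸ hx)

lemma residueIntegral_esymMap_eq_sum_pi [CompleteSpace F] {R : Fin N → ℝ} (hR : ∀ i, 0 ≤ R i)
    (hf : DifferentiableOn ℂ f (univ.pi fun i => closedBall (c i) (R i)))
    (hz : ∀ i j, z j ∉ sphere (c i) (R i)) (hinj : Injective z) :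
    residueIntegral c R f (esymMap N z) =
      ∑ σ : Fin N → Fin N, (∏ i, Lagrange.nodalWeight Finset.univ z (σ i)) •
        (∏ i, ∮ x in C(c i, R i), (x - z (σ i))⁻¹) • offDiagDiffProd (z ∘ σ) • f (z ∘ σ) := by
  have hDf : DifferentiableOn ℂ (fun x => offDiagDiffProd x • f x)
      (univ.pi fun i => closedBall (c i) (R i)) :=
    differentiable_offDiagDiffProd.differentiableOn.smul hf
  have hexpand : EqOn
      (fun x => (∏ i, ((vietaPoly (esymMap N z)).eval (x i))⁻¹) • offDiagDiffProd x • f x)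
      (fun x => ∑ σ : Fin N → Fin N, (∏ i, Lagrange.nodalWeight Finset.univ z (σ i)) •
        (∏ i, (x i - z (σ i))⁻¹) • offDiagDiffProd x • f x)
      (univ.pi fun i => sphere (c i) (R i)) := by
    intro x hx
    have hxz (i j : Fin N) : x i ≠ z j := fun h => hz i j (h ▸ hx i (mem_univ i))
    simp only [eval_vietaPoly_esymMap, prod_inv_prod_sub_eq_sum_nodalWeight hinj hxz,
      Finset.sum_smul, mul_smul]
  rw [residueIntegral, torusIntegral_congr hR hexpand, torusIntegral_finsetSum]
  · refine Finset.sum_congr rfl fun σ _ => ?_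
    rw [torusIntegral_smul]
    exact congrArg _ (torusIntegral_prod_sub_inv_smul hR hDf fun i => hz i (σ i))
  · exact fun σ _ => torusIntegrable_of_continuousOn hR <|
      .const_smul ((continuousOn_prod_sub_inv fun i => hz i (σ i)).smul
        (hDf.continuousOn.mono pi_sphere_subset_pi_closedBall)) _

lemma residueIntegral_esymMap [CompleteSpace F] {R : Fin N → ℝ} (hR : ∀ i, 0 ≤ R i)
    (hf : DifferentiableOn ℂ f (univ.pi fun i => closedBall (c i) (R i)))
    (hz : ∀ i j, z j ∉ sphere (c i) (R i)) (hinj : Injective z) :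
    residueIntegral c R f (esymMap N z) =
      ∑ π : Equiv.Perm (Fin N), (∏ i, ∮ x in C(c i, R i), (x - z (π i))⁻¹) • f (z ∘ π) := by
  rw [residueIntegral_esymMap_eq_sum_pi hR hf hz hinj]
  symm
  refine Fintype.sum_of_injective (fun π : Equiv.Perm (Fin N) => (π : Fin N → Fin N))
    DFunLike.coe_injective _ _ (fun σ hσ => ?_) fun π => ?_
  · have hσinj : ¬ Injective σ := fun h =>
      hσ ⟨Equiv.ofBijective σ (Finite.injective_iff_bijective.1 h), rfl⟩
    rw [offDiagDiffProd_of_not_injective fun h => hσinj h.of_comp, zero_smul, smul_zero, smul_zero]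
  · rw [offDiagDiffProd_comp_perm, Equiv.prod_comp π, prod_nodalWeight, smul_comm (∏ i, _),
      inv_smul_smul₀ (offDiagDiffProd_ne_zero hinj)]

end ResidueIntegral

lemma dense_setOf_injective {ι 𝕜 : Type*} [Finite ι] [NontriviallyNormedField 𝕜]
    [CompleteSpace 𝕜] : Dense {z : ι → 𝕜 | Injective z} := by
  have := Fintype.ofFinite ι
  classical
  have hinter : {z : ι → 𝕜 | Injective z} =
      ⋂ p : {p : ι × ι // p.1 ≠ p.2}, {z | z p.1.1 ≠ z p.1.2} := by
    ext z
    simp only [mem_ofPred_eq, mem_iInter, Subtype.forall, Prod.forall, Injective]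
    exact ⟨fun h i j hij hz => hij (h hz), fun h i j hz => by_contra fun hij => h i j hij hz⟩
  rw [hinter]
  refine dense_iInter_of_isOpen (fun p => isOpen_ne_fun (by fun_prop) (by fun_prop)) ?_
  rintro ⟨⟨i, j⟩, hij⟩
  let diagonal : Submodule 𝕜 (ι → 𝕜) :=
    LinearMap.ker (LinearMap.proj (R := 𝕜) (φ := fun _ : ι => 𝕜) i - LinearMap.proj j)
  have hdiag : (diagonal : Set (ι → 𝕜))ᶜ = {z | z i ≠ z j} := by
    ext z
    simp [diagonal, sub_eq_zero]
  rw [← hdiag, ← interior_eq_empty_iff_dense_compl, ← not_nonempty_iff_eq_empty]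
  intro hne
  have hmem : (Pi.single i 1 : ι → 𝕜) ∈ diagonal :=
    diagonal.eq_top_of_nonempty_interior' hne ▸ trivial
  simp [diagonal, hij] at hmem

section SeparatingRadius

variable {ι α : Type*}

/-- The radius `r` is at most half the distance between any two distinct values of `c`, so that
the open balls of radius `r` about these values are disjoint. -/
def IsSeparatingRadius [PseudoMetricSpace α] (c : ι → α) (r : ℝ) : Prop :=
  ∀ i j, c i ≠ c j → 2 * r ≤ dist (c i) (c j)

lemma IsSeparatingRadius.notMem_closedBall [PseudoMetricSpace α] {c : ι → α} {r : ℝ}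
    (hsep : IsSeparatingRadius c r) {i j : ι} (hij : c j ≠ c i) {x : α} (hx : x ∈ ball (c j) r) :
    x ∉ closedBall (c i) r := by
  intro hxi
  rw [mem_ball] at hx
  rw [mem_closedBall] at hxi
  linarith [hsep j i hij, dist_triangle_left (c j) (c i) x]

lemma IsSeparatingRadius.notMem_sphere [PseudoMetricSpace α] {c : ι → α} {r : ℝ}
    (hsep : IsSeparatingRadius c r) (i : ι) {j : ι} {x : α} (hx : x ∈ ball (c j) r) :
    x ∉ sphere (c i) r := by
  by_cases hij : c j = c i
  · rw [← hij]
    exact fun h => (mem_ball.1 hx).ne (mem_sphere.1 h)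
  · exact fun h => hsep.notMem_closedBall hij hx (sphere_subset_closedBall h)

lemma eventually_isSeparatingRadius [Finite ι] [MetricSpace α] (c : ι → α) :
    ∀ᶠ r in 𝓝 0, IsSeparatingRadius c r := by
  refine Filter.eventually_all.2 fun i => Filter.eventually_all.2 fun j => ?_
  by_cases hij : c i = c j
  · exact .of_forall fun r h => absurd hij h
  · have hcont : Filter.Tendsto (fun r : ℝ => 2 * r) (𝓝 0) (𝓝 0) := by
      simpa using (continuous_const_mul (2 : ℝ)).tendsto 0
    exact (hcont.eventually (Iic_mem_nhds (dist_pos.2 hij))).mono fun r hr _ => hr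

lemma exists_isSeparatingRadius_closedBall_subset [Fintype ι] [MetricSpace α]
    {c : ι → α} {V : Set (ι → α)} (hV : V ∈ 𝓝 c) :
    ∃ r > 0, IsSeparatingRadius c r ∧ closedBall c r ⊆ V := by
  have hsmall := (eventually_isSeparatingRadius c).and (eventually_closedBall_subset hV)
  have hright : ∀ᶠ r in 𝓝[>] (0 : ℝ), IsSeparatingRadius c r ∧ closedBall c r ⊆ V :=
    hsmall.filter_mono nhdsWithin_le_nhds
  exact (eventually_mem_nhdsWithin.and hright).exists

lemma circleIntegral_sub_inv_of_isSeparatingRadius {c : ι → ℂ} {r : ℝ} (hr : 0 < r)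
    (hsep : IsSeparatingRadius c r) {i j : ι} {w : ℂ} (hw : w ∈ ball (c j) r) :
    (∮ x in C(c i, r), (x - w)⁻¹) = if c j = c i then 2 * Real.pi * I else 0 := by
  split_ifs with hij
  · exact circleIntegral.integral_sub_inv_of_mem_ball (hij ▸ hw)
  · exact circleIntegral_sub_inv_of_notMem_closedBall hr.le (hsep.notMem_closedBall hij hw)

end SeparatingRadius

/-- The number of permutations of the coordinates that fix the point `c`. -/
def stabilizerCard {ι α : Type*} (c : ι → α) : ℕ :=
  Nat.card {π : Equiv.Perm ι // c ∘ π = c}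

lemma stabilizerCard_ne_zero {ι α : Type*} [Finite ι] (c : ι → α) : stabilizerCard c ≠ 0 :=
  have : Nonempty {π : Equiv.Perm ι // c ∘ π = c} := ⟨⟨1, rfl⟩⟩
  Nat.card_pos.ne'

section LocalFactorization

variable {F : Type*} [NormedAddCommGroup F] [NormedSpace ℂ F] [CompleteSpace F]
  {c z : Fin N → ℂ} {r : ℝ} {f : (Fin N → ℂ) → F} {V : Set (Fin N → ℂ)}

lemma residueIntegral_esymMap_of_isSeparatingRadius (hr : 0 < r) (hsep : IsSeparatingRadius c r)
    (hf : DifferentiableOn ℂ f (closedBall c r)) (hz : z ∈ ball c r)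
    (hinj : Injective z) (hsym : ∀ π : Equiv.Perm (Fin N), c ∘ π = c → f (z ∘ π) = f z) :
    residueIntegral c (fun _ => r) f (esymMap N z) =
      (stabilizerCard c * (2 * Real.pi * I) ^ N) • f z := by
  classical
  have hzc (j : Fin N) : z j ∈ ball (c j) r := by
    rw [ball_pi c hr] at hz
    exact hz j (mem_univ j)
  rw [closedBall_pi c hr.le] at hf
  rw [residueIntegral_esymMap (fun _ => hr.le) hf
    (fun i j => hsep.notMem_sphere i (hzc j)) hinj]
  have hterm (π : Equiv.Perm (Fin N)) :
      (∏ i, ∮ x in C(c i, r), (x - z (π i))⁻¹) • f (z ∘ π) =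
        if c ∘ π = c then (2 * Real.pi * I) ^ N • f z else 0 := by
    simp only [circleIntegral_sub_inv_of_isSeparatingRadius hr hsep (hzc _)]
    split_ifs with hπ
    · simp only [show ∀ i, c (π i) = c i from congrFun hπ, if_true, Fin.prod_const, hsym π hπ]
    · obtain ⟨i, hi⟩ := not_forall.1 (mt funext hπ)
      rw [Finset.prod_eq_zero (Finset.mem_univ i) (if_neg hi), zero_smul]
  simp only [hterm]
  rw [← Finset.sum_filter, Finset.sum_const, ← Fintype.card_subtype, ← Nat.card_eq_fintype_card,
    ← stabilizerCard, mul_smul, Nat.cast_smul_eq_nsmul]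

lemma exists_analyticAt_comp_esymMap (hV : IsOpen V) (hf : AnalyticOnNhd ℂ f V)
    (hsym : ∀ (π : Equiv.Perm (Fin N)), ∀ z ∈ V, z ∘ π ∈ V → f (z ∘ π) = f z) (hc : c ∈ V) :
    ∃ G : (Fin N → ℂ) → F, AnalyticAt ℂ G (esymMap N c) ∧
      ∀ᶠ z in 𝓝 c, f z = G (esymMap N z) := by
  obtain ⟨r, hr, hsep, hrV⟩ := exists_isSeparatingRadius_closedBall_subset (hV.mem_nhds hc)
  have hBV : ball c r ⊆ V := ball_subset_closedBall.trans hrV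
  have hfd : DifferentiableOn ℂ f (closedBall c r) := hf.differentiableOn.mono hrV
  set K : ℂ := stabilizerCard c * (2 * Real.pi * I) ^ N
  have hK : K ≠ 0 := mul_ne_zero (Nat.cast_ne_zero.2 (stabilizerCard_ne_zero c))
    (pow_ne_zero _ two_pi_I_ne_zero)
  let G (s : Fin N → ℂ) : F := K⁻¹ • residueIntegral c (fun _ => r) f s
  have hG : ∀ z ∈ ball c r, AnalyticAt ℂ G (esymMap N z) := by
    intro z hz
    rw [ball_pi c hr] at hz
    rw [closedBall_pi c hr.le] at hfd
    exact analyticAt_const.smul (analyticAt_residueIntegral_esymMap (fun _ => hr.le)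
      (hfd.continuousOn.mono pi_sphere_subset_pi_closedBall)
      fun i j => hsep.notMem_sphere i (hz j (mem_univ j)))
  have hinj : EqOn f (G ∘ esymMap N) (ball c r ∩ {z | Injective z}) := by
    rintro z ⟨hz, hzinj⟩
    have hsymz (π : Equiv.Perm (Fin N)) (hπ : c ∘ π = c) : f (z ∘ π) = f z := by
      refine hsym π z (hBV hz) (hBV ?_)
      rw [← hπ, ball_pi _ hr]
      rw [ball_pi _ hr] at hz
      exact fun i _ => hz (π i) (mem_univ _)
    simp only [G, comp_apply,
      residueIntegral_esymMap_of_isSeparatingRadius hr hsep hfd hz hzinj hsymz]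
    exact (inv_smul_smul₀ hK _).symm
  have heq : EqOn f (G ∘ esymMap N) (ball c r) :=
    hinj.of_subset_closure (hf.continuousOn.mono hBV)
      (fun z hz => ((hG z hz).continuousAt.comp continuous_esymMap.continuousAt).continuousWithinAt)
      inter_subset_left (dense_setOf_injective.open_subset_closure_inter isOpen_ball)
  exact ⟨G, hG c (mem_ball_self hr), heq.eventuallyEq_of_mem (ball_mem_nhds c hr)⟩

end LocalFactorization

theorem statement19_general {F : Type*} [NormedAddCommGroup F] [NormedSpace ℂ F] [CompleteSpace F]
    {V : Set (Fin N → ℂ)} (hV : IsOpen V) {f : (Fin N → ℂ) → F} (hf : AnalyticOnNhd ℂ f V)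
    (hsym : ∀ (π : Equiv.Perm (Fin N)), ∀ z ∈ V, z ∘ π ∈ V → f (z ∘ π) = f z) :
    IsOpen (esymMap N '' V) ∧
    ∃ g : (Fin N → ℂ) → F, AnalyticOnNhd ℂ g (esymMap N '' V) ∧
      ∀ z ∈ V, f z = g (esymMap N z) := by
  let g := f ∘ invFunOn (esymMap N) V
  have hfg : ∀ z ∈ V, f z = g (esymMap N z) := by
    intro z hz
    have hex : ∃ w ∈ V, esymMap N w = esymMap N z := ⟨z, hz, rfl⟩
    obtain ⟨π, hπ⟩ := exists_perm_of_esymMap_eq (invFunOn_eq hex).symm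
    have hmem : z ∘ π ∈ V := hπ ▸ invFunOn_mem hex
    change f z = f (invFunOn (esymMap N) V (esymMap N z))
    rw [← hπ, hsym π z hz hmem]
  refine ⟨isOpenMap_esymMap V hV, g, ?_, hfg⟩
  rintro _ ⟨c, hc, rfl⟩
  obtain ⟨G, hG, hfG⟩ := exists_analyticAt_comp_esymMap hV hf hsym hc
  refine hG.congr (isOpenMap_esymMap.nhds_le c (Filter.mem_map.2 ?_))
  filter_upwards [hfG, hV.mem_nhds hc] with z hz hzV
  exact hz.symm.trans (hfg z hzV)

/-- holomorphic factorization of symmetric analytic functions. If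
`f : U^N → ℂ` is analytic and invariant under permutations of its coordinates, then
`S = e(U^N)` is open and there is an analytic `g : S → ℂ` with `f = g ∘ e` on `U^N`. -/
theorem statement19 (N : ℕ) (hN : 1 ≤ N) (U : Set ℂ) (hU : IsOpen U)
    (f : (Fin N → ℂ) → ℂ)
    (hf : AnalyticOnNhd ℂ f {z : Fin N → ℂ | ∀ j, z j ∈ U})
    (hsym : ∀ (π : Equiv.Perm (Fin N)) (z : Fin N → ℂ), (∀ j, z j ∈ U) →
      f (z ∘ π) = f z) :
    IsOpen (esymMap N '' {z : Fin N → ℂ | ∀ j, z j ∈ U}) ∧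
    ∃ g : (Fin N → ℂ) → ℂ,
      AnalyticOnNhd ℂ g (esymMap N '' {z : Fin N → ℂ | ∀ j, z j ∈ U}) ∧
      ∀ z : Fin N → ℂ, (∀ j, z j ∈ U) → f z = g (esymMap N z) := by
  have hV : IsOpen {z : Fin N → ℂ | ∀ j, z j ∈ U} := by
    simpa [Set.pi] using isOpen_set_pi finite_univ fun (_ : Fin N) _ => hU
  exact statement19_general hV hf fun π z hz _ => hsym π z hz
end
end
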